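/- Let g : ℕ → ℂ satisfy Σ_{n≥0} g(n)q^n = (∏_{k≥0}(1 − q^{10k+2})(1 − q^{10k+8})) · (∏_{k≥0}(1 − q^{10k+4})(1 − q^{10k+6}))² · (∏_{k≥0}(1 − q^{5k+2})(1 − q^{5k+3}))^{−2} for all complex q with |q| < 1. Then, as n → ∞ restricted to n ≢ 1 (mod 5), g(n) is asymptotically equivalent to 30^{−1/4}·( sin(π/5) + sin((2π/5)(2n+1)) )·(n − 1/3)^{−3/4}·exp((√2·π/√15)·√(n − 1/3)); that is, the ratio of the two sides tends to 1 along integers n with n ≢ 1 (mod 5). -/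

import Mathlib

open Filter Topology Complex

/-!
The Jacobi triple product writes the generating function as a quotient of theta functions. With
`q = ζ e^{-s}`, the modular transformation of `jacobiTheta₂` shows that at the three cusps `ζ = 1`
and `ζ = e^{±4πi/5}` the product is `(c + o(1)) e^{π²/(30 s)}` as `s → 0`. Away from these cusps the
Lambert series of its logarithm bounds it by `e^{π²/(40 Re s)}`. Cauchy's formula on the circle of
radius `e^{-σ}`, `σ = π/√(30 n)`, therefore localises near the cusps, each of which contributes a
Gaussian integral. The three values `c`, multiplied by the phases `ζ^{-n}`, add up to twice
`sin(π/5) + sin((2π/5)(2n+1))`, which is bounded away from `0` for `n ≢ 1 (mod 5)`. Replacing `n`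
by `n - 1/3` in the growth factor changes it only by a factor `1 + o(1)`.
-/

section GaussianBinomial

/-- The Gaussian binomial coefficient `[M choose j]_q`, defined by the `q`-Pascal recurrence so that
it makes sense without dividing by `1 - q ^ i`. -/
def gaussBinom {R : Type*} [Semiring R] (q : R) : ℕ → ℕ → R
  | _, 0 => 1
  | 0, _ + 1 => 0
  | M + 1, j + 1 => gaussBinom q M j + q ^ (j + 1) * gaussBinom q M (j + 1)

/-- The finite `q`-Pochhammer symbol `(a; q)_n`. -/
def qPochhammer {R : Type*} [CommRing R] (a q : R) (n : ℕ) : R :=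
  ∏ k ∈ Finset.range n, (1 - a * q ^ k)

theorem gaussBinom_zero_right {R : Type*} [Semiring R] (q : R) (M : ℕ) : gaussBinom q M 0 = 1 := by
  cases M <;> rfl

theorem gaussBinom_eq_zero_of_lt {R : Type*} [Semiring R] (q : R) :
    ∀ {M j : ℕ}, M < j → gaussBinom q M j = 0
  | 0, _ + 1, _ => rfl
  | M + 1, j + 1, h => by
    rw [gaussBinom, gaussBinom_eq_zero_of_lt q (by lia : M < j),
      gaussBinom_eq_zero_of_lt q (by lia : M < j + 1), mul_zero, add_zero]

theorem gaussBinom_self {R : Type*} [Semiring R] (q : R) (M : ℕ) : gaussBinom q M M = 1 := by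
  induction M with
  | zero => rfl
  | succ M ih =>
    rw [gaussBinom, ih, gaussBinom_eq_zero_of_lt q M.lt_succ_self, mul_zero, add_zero]

theorem qPochhammer_succ {R : Type*} [CommRing R] (a q : R) (n : ℕ) :
    qPochhammer a q (n + 1) = qPochhammer a q n * (1 - a * q ^ n) :=
  Finset.prod_range_succ _ _

theorem qPochhammer_mul_eq_prod_residues {R : Type*} [CommRing R] (a q : R) (N n : ℕ) :
    qPochhammer a q (N * n) = ∏ r ∈ Finset.range N, qPochhammer (a * q ^ r) (q ^ N) n := by
  induction n with
  | zero => simp [qPochhammer]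
  | succ n ih =>
    rw [Nat.mul_succ, qPochhammer, Finset.prod_range_add]
    simp only [qPochhammer_succ]
    rw [Finset.prod_mul_distrib, ← ih]
    exact congrArg _ (Finset.prod_congr rfl fun r _ => by ring)

theorem gaussBinom_mul_qPochhammer {R : Type*} [CommRing R] (q : R) (a b : ℕ) :
    gaussBinom q (a + b) a * (qPochhammer q q a * qPochhammer q q b) = qPochhammer q q (a + b) := by
  induction h : a + b generalizing a b with
  | zero =>
    obtain ⟨rfl, rfl⟩ : a = 0 ∧ b = 0 := by lia
    simp [gaussBinom, qPochhammer]
  | succ n ih =>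
    rcases a with _ | a
    · obtain rfl : b = n + 1 := by lia
      simp [gaussBinom_zero_right, qPochhammer]
    rcases b with _ | b
    · obtain rfl : a = n := by lia
      simp [gaussBinom_self, qPochhammer]
    obtain rfl : n = a + b + 1 := by lia
    have left := ih a (b + 1) (by lia)
    have right := ih (a + 1) b (by lia)
    rw [qPochhammer_succ] at left right
    rw [gaussBinom, qPochhammer_succ q q (a + b + 1), qPochhammer_succ q q a,
      qPochhammer_succ q q b]
    linear_combination (1 - q ^ (a + 1)) * left + q ^ (a + 1) * (1 - q ^ (b + 1)) * right

theorem prod_one_add_mul_pow_eq_sum_gaussBinom {R : Type*} [CommSemiring R] (q x : R) (M : ℕ) :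
    ∏ k ∈ Finset.range M, (1 + x * q ^ k) =
      ∑ j ∈ Finset.range (M + 1), gaussBinom q M j * q ^ j.choose 2 * x ^ j := by
  induction M generalizing x with
  | zero => simp [gaussBinom]
  | succ M ih =>
    have shift : ∏ k ∈ Finset.range M, (1 + x * q ^ (k + 1)) =
        ∏ k ∈ Finset.range M, (1 + x * q * q ^ k) :=
      Finset.prod_congr rfl fun k _ => by ring
    have drop : ∑ j ∈ Finset.range (M + 1), gaussBinom q M j * q ^ j.choose 2 * (x * q) ^ j =
        (∑ j ∈ Finset.range (M + 1),
          gaussBinom q M (j + 1) * q ^ (j + 1).choose 2 * (x * q) ^ (j + 1)) + 1 := by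
      rw [Finset.sum_range_succ', Finset.sum_range_succ _ M,
        gaussBinom_eq_zero_of_lt q M.lt_succ_self]
      simp [gaussBinom_zero_right]
    rw [Finset.prod_range_succ', shift, ih, pow_zero, mul_one, mul_add, mul_one]
    nth_rewrite 1 [drop]
    rw [Finset.sum_range_succ' _ (M + 1), Finset.sum_mul, add_right_comm,
      ← Finset.sum_add_distrib]
    congr 1
    · refine Finset.sum_congr rfl fun j _ => ?_
      rw [gaussBinom, Nat.choose_succ_succ' j 1, Nat.choose_one_right]
      ring
    · simp [gaussBinom_zero_right]

end GaussianBinomial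

section QPochhammerInf

variable {K : Type*} [NormedField K]

/-- The infinite `q`-Pochhammer symbol `(a; q)_∞`. -/
noncomputable def qPochhammerInf (a q : K) : K := ∏' k : ℕ, (1 - a * q ^ k)

theorem summable_norm_mul_pow {q : K} (hq : ‖q‖ < 1) (a : K) :
    Summable fun k : ℕ => ‖-(a * q ^ k)‖ := by
  simp only [norm_neg, norm_mul, norm_pow]
  exact (summable_geometric_of_lt_one (norm_nonneg _) hq).mul_left _

theorem one_sub_mul_pow_ne_zero {a q : K} (hq : ‖q‖ < 1) (ha : ‖a‖ < 1) (k : ℕ) :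
    1 - a * q ^ k ≠ 0 := by
  refine sub_ne_zero.2 fun h => ?_
  have hlt : ‖a * q ^ k‖ < 1 := by
    rw [norm_mul, norm_pow]
    exact mul_lt_one_of_nonneg_of_lt_one_left (norm_nonneg _) ha (pow_le_one₀ (norm_nonneg _) hq.le)
  rw [← h, norm_one] at hlt
  exact lt_irrefl _ hlt

theorem qPochhammer_ne_zero {a q : K} (hq : ‖q‖ < 1) (ha : ‖a‖ < 1) (n : ℕ) :
    qPochhammer a q n ≠ 0 :=
  Finset.prod_ne_zero_iff.2 fun k _ => one_sub_mul_pow_ne_zero hq ha k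

variable [CompleteSpace K]

theorem multipliable_one_sub_mul_pow {q : K} (hq : ‖q‖ < 1) (a : K) :
    Multipliable fun k : ℕ => 1 - a * q ^ k := by
  simpa only [← sub_eq_add_neg] using multipliable_one_add_of_summable (summable_norm_mul_pow hq a)

theorem tendsto_qPochhammer {q : K} (hq : ‖q‖ < 1) (a : K) :
    Tendsto (qPochhammer a q) atTop (𝓝 (qPochhammerInf a q)) :=
  (multipliable_one_sub_mul_pow hq a).hasProd.tendsto_prod_nat

theorem qPochhammerInf_ne_zero {a q : K} (hq : ‖q‖ < 1) (ha : ‖a‖ < 1) :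
    qPochhammerInf a q ≠ 0 := by
  have h := tprod_one_add_ne_zero_of_summable (f := fun k => -(a * q ^ k))
    (fun k => by simpa only [← sub_eq_add_neg] using one_sub_mul_pow_ne_zero hq ha k)
    (summable_norm_mul_pow hq a)
  simpa only [← sub_eq_add_neg, qPochhammerInf] using h

theorem qPochhammerInf_eq_prod_residues {q : K} (hq : ‖q‖ < 1) (a : K) {N : ℕ} (hN : N ≠ 0) :
    qPochhammerInf a q = ∏ r ∈ Finset.range N, qPochhammerInf (a * q ^ r) (q ^ N) := by
  have hqN : ‖q ^ N‖ < 1 := by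
    rw [norm_pow]
    exact pow_lt_one₀ (norm_nonneg _) hq hN
  have hmul : Tendsto (fun n => N * n) atTop atTop :=
    tendsto_id.const_mul_atTop' (Nat.pos_of_ne_zero hN)
  refine tendsto_nhds_unique (((tendsto_qPochhammer hq a).comp hmul).congr fun n => ?_)
    (tendsto_finsetProd _ fun r _ => tendsto_qPochhammer hqN (a * q ^ r))
  exact qPochhammer_mul_eq_prod_residues a q N n

end QPochhammerInf

section JacobiTripleProduct

theorem prod_range_pow_two_mul_add_one {M : Type*} [CommMonoid M] (p : M) (N : ℕ) :
    ∏ k ∈ Finset.range N, p ^ (2 * k + 1) = p ^ N ^ 2 := by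
  induction N with
  | zero => simp
  | succ N ih =>
    rw [Finset.prod_range_succ, ih, ← pow_add]
    ring_nf

theorem prod_range_two_mul_one_add_mul_zpow {K : Type*} [Field K] {p x : K} (hp : p ≠ 0)
    (hx : x ≠ 0) (N : ℕ) :
    ∏ k ∈ Finset.range (2 * N), (1 + x * p ^ (1 - 2 * N : ℤ) * (p ^ 2) ^ k) =
      x ^ N * (p ^ N ^ 2)⁻¹ *
        (qPochhammer (-(x * p)) (p ^ 2) N * qPochhammer (-(x⁻¹ * p)) (p ^ 2) N) := by
  have hpoch : ∀ y : K, qPochhammer (-(y * p)) (p ^ 2) N =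
      ∏ k ∈ Finset.range N, (1 + y * p ^ (2 * k + 1)) := fun y =>
    Finset.prod_congr rfl fun k _ => by ring
  have upper : ∀ k, 1 + x * p ^ (1 - 2 * N : ℤ) * (p ^ 2) ^ (N + k) = 1 + x * p ^ (2 * k + 1) := by
    intro k
    rw [mul_assoc, ← pow_mul, ← zpow_natCast, ← zpow_natCast, ← zpow_add₀ hp]
    congr 3
    push_cast
    ring
  have lower : ∀ k ∈ Finset.range N, 1 + x * p ^ (1 - 2 * N : ℤ) * (p ^ 2) ^ (N - 1 - k) =
      x * (p ^ (2 * k + 1))⁻¹ * (1 + x⁻¹ * p ^ (2 * k + 1)) := by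
    intro k hk
    have hk : k < N := Finset.mem_range.1 hk
    have hpow : p ^ (1 - 2 * N : ℤ) * (p ^ 2) ^ (N - 1 - k) = (p ^ (2 * k + 1))⁻¹ := by
      rw [← pow_mul, ← zpow_natCast, ← zpow_natCast, ← zpow_neg, ← zpow_add₀ hp]
      congr 1
      lia
    rw [mul_assoc, hpow]
    field_simp
    ring
  rw [hpoch, hpoch, two_mul, Finset.prod_range_add, ← Finset.prod_range_reflect _ N,
    Finset.prod_congr rfl lower, Finset.prod_congr rfl fun k _ => upper k,
    Finset.prod_mul_distrib, Finset.prod_mul_distrib, Finset.prod_const, Finset.prod_inv_distrib,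
    prod_range_pow_two_mul_add_one, Finset.card_range]
  ring

theorem qPochhammer_mul_qPochhammer_eq_sum_gaussBinom {K : Type*} [Field K] {p x : K} (hp : p ≠ 0)
    (hx : x ≠ 0) (N : ℕ) :
    qPochhammer (-(x * p)) (p ^ 2) N * qPochhammer (-(x⁻¹ * p)) (p ^ 2) N =
      ∑ n ∈ Finset.Icc (-N : ℤ) N,
        gaussBinom (p ^ 2) (2 * N) (n + N).toNat * (p ^ (n ^ 2) * x ^ n) := by
  have reindex : ∑ n ∈ Finset.Icc (-N : ℤ) N,
        gaussBinom (p ^ 2) (2 * N) (n + N).toNat * (p ^ (n ^ 2) * x ^ n) =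
      ∑ j ∈ Finset.range (2 * N + 1), gaussBinom (p ^ 2) (2 * N) j *
        (p ^ ((j - N : ℤ) ^ 2) * x ^ (j - N : ℤ)) := by
    refine Finset.sum_nbij' (fun n => (n + N).toNat) (fun j => j - N) ?_ ?_ ?_ ?_ ?_ <;>
      intro n hn <;> simp only [Finset.mem_Icc, Finset.mem_range] at hn ⊢
    · lia
    · lia
    · lia
    · lia
    · rw [Int.toNat_of_nonneg (by lia), add_sub_cancel_right]
  have term : ∀ j : ℕ, gaussBinom (p ^ 2) (2 * N) j * (p ^ 2) ^ j.choose 2 *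
        (x * p ^ (1 - 2 * N : ℤ)) ^ j =
      x ^ N * (p ^ N ^ 2)⁻¹ *
        (gaussBinom (p ^ 2) (2 * N) j * (p ^ ((j - N : ℤ) ^ 2) * x ^ (j - N : ℤ))) := by
    intro j
    have hchoose : 2 * (j.choose 2 : ℤ) = j * (j - 1) := by
      have : 2 * (j.choose 2 : ℚ) = j * (j - 1) := by rw [Nat.cast_choose_two]; ring
      exact_mod_cast this
    have hexp : p ^ (2 * j.choose 2) * p ^ ((1 - 2 * N : ℤ) * j) =
        (p ^ N ^ 2)⁻¹ * p ^ ((j - N : ℤ) ^ 2) := by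
      rw [← zpow_natCast, ← zpow_natCast, ← zpow_neg, ← zpow_add₀ hp, ← zpow_add₀ hp]
      congr 1
      push_cast
      linear_combination hchoose
    rw [mul_pow, ← zpow_natCast (p ^ _) j, ← zpow_mul, ← pow_mul, zpow_sub₀ hx, zpow_natCast,
      zpow_natCast]
    field_simp at hexp ⊢
    linear_combination gaussBinom (p ^ 2) (2 * N) j * hexp
  have hqbinom := prod_one_add_mul_pow_eq_sum_gaussBinom (p ^ 2) (x * p ^ (1 - 2 * N : ℤ)) (2 * N)
  rw [prod_range_two_mul_one_add_mul_zpow hp hx, Finset.sum_congr rfl fun j _ => term j,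
    ← Finset.mul_sum, ← reindex] at hqbinom
  exact mul_left_cancel₀ (mul_ne_zero (pow_ne_zero _ hx) (inv_ne_zero (pow_ne_zero _ hp))) hqbinom

variable {K : Type*} [NormedField K]

theorem summable_zpow_sq_mul_zpow [CompleteSpace K] {p x : K} (hp : ‖p‖ < 1) :
    Summable fun n : ℤ => p ^ (n ^ 2) * x ^ n := by
  have half : ∀ y : K, Summable fun n : ℕ => p ^ n ^ 2 * y ^ n := fun y => by
    have hzero : Tendsto (fun n : ℕ => p ^ n * y) atTop (𝓝 0) := by
      simpa only [zero_mul] using (tendsto_pow_atTop_nhds_zero_of_norm_lt_one hp).mul_const y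
    have hsmall : ∀ᶠ n : ℕ in atTop, ‖p ^ n * y‖ ≤ 1 / 2 :=
      hzero.norm.eventually_le_const (by norm_num)
    refine Summable.of_norm_bounded_eventually_nat summable_geometric_two ?_
    filter_upwards [hsmall] with n hn
    rw [sq, pow_mul, ← mul_pow, norm_pow]
    gcongr
  refine Summable.of_nat_of_neg ?_ ?_
  · exact_mod_cast half x
  · refine (half x⁻¹).congr fun n => ?_
    rw [neg_sq, zpow_neg, inv_pow]
    norm_cast

theorem gaussBinom_eq_div {q : K} (hq : ‖q‖ < 1) {M j : ℕ} (hj : j ≤ M) :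
    gaussBinom q M j =
      qPochhammer q q M / (qPochhammer q q j * qPochhammer q q (M - j)) := by
  have h := gaussBinom_mul_qPochhammer q j (M - j)
  rw [Nat.add_sub_cancel' hj] at h
  rw [← h, mul_div_cancel_right₀]
  exact mul_ne_zero (qPochhammer_ne_zero hq hq _) (qPochhammer_ne_zero hq hq _)

variable [CompleteSpace K]

theorem exists_qPochhammer_norm_bounds {q : K} (hq : ‖q‖ < 1) :
    ∃ b B : ℝ, 0 < b ∧ ∀ n, b ≤ ‖qPochhammer q q n‖ ∧ ‖qPochhammer q q n‖ ≤ B := by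
  have hlim := tendsto_qPochhammer hq q
  obtain ⟨B, hB⟩ := hlim.norm.bddAbove_range
  obtain ⟨c, hc⟩ := (hlim.inv₀ (qPochhammerInf_ne_zero hq hq)).norm.bddAbove_range
  simp only [norm_inv, mem_upperBounds, Set.forall_mem_range] at hB hc
  have hpos : ∀ n, 0 < ‖qPochhammer q q n‖ := fun n =>
    norm_pos_iff.2 (qPochhammer_ne_zero hq hq n)
  have hc0 : 0 < c := (inv_pos.2 (hpos 0)).trans_le (hc 0)
  exact ⟨c⁻¹, B, inv_pos.2 hc0, fun n => ⟨inv_le_of_inv_le₀ (hpos n) (hc n), hB n⟩⟩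

theorem exists_norm_gaussBinom_le {q : K} (hq : ‖q‖ < 1) :
    ∃ C : ℝ, ∀ M j, ‖gaussBinom q M j‖ ≤ C := by
  obtain ⟨b, B, hb, hbB⟩ := exists_qPochhammer_norm_bounds hq
  have hB : 0 ≤ B := (norm_nonneg _).trans (hbB 0).2
  refine ⟨B / (b * b), fun M j => ?_⟩
  rcases lt_or_ge M j with hj | hj
  · rw [gaussBinom_eq_zero_of_lt q hj, norm_zero]
    positivity
  · rw [gaussBinom_eq_div hq hj, norm_div, norm_mul]
    gcongr
    exacts [(hbB _).2, (hbB _).1, (hbB _).1]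

theorem tendsto_gaussBinom_central {q : K} (hq : ‖q‖ < 1) (n : ℤ) :
    Tendsto (fun N : ℕ => gaussBinom q (2 * N) (n + N).toNat) atTop
      (𝓝 (qPochhammerInf q q)⁻¹) := by
  have hP := qPochhammerInf_ne_zero hq hq
  have hlim : ∀ u : ℕ → ℕ, (∀ N, N ≤ u N + n.natAbs) →
      Tendsto (fun N => qPochhammer q q (u N)) atTop (𝓝 (qPochhammerInf q q)) := fun u hu =>
    (tendsto_qPochhammer hq q).comp (tendsto_atTop.2 fun M => by
      filter_upwards [eventually_ge_atTop (M + n.natAbs)] with N hN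
      have := hu N
      lia)
  have h := (hlim (fun N => 2 * N) fun N => by lia).div
    ((hlim (fun N => (n + N).toNat) fun N => by lia).mul
      (hlim (fun N => 2 * N - (n + N).toNat) fun N => by lia)) (mul_ne_zero hP hP)
  rw [div_mul_cancel_left₀ hP] at h
  refine h.congr' ?_
  filter_upwards [eventually_ge_atTop n.natAbs] with N hN
  exact (gaussBinom_eq_div hq (by lia)).symm

theorem jacobi_triple_product {p x : K} (hp₀ : p ≠ 0) (hp : ‖p‖ < 1) (hx : x ≠ 0) :
    qPochhammerInf (-(x * p)) (p ^ 2) * qPochhammerInf (-(x⁻¹ * p)) (p ^ 2) *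
        qPochhammerInf (p ^ 2) (p ^ 2) =
      ∑' n : ℤ, p ^ (n ^ 2) * x ^ n := by
  have hq : ‖p ^ 2‖ < 1 := by
    rw [norm_pow]
    exact pow_lt_one₀ (norm_nonneg _) hp two_ne_zero
  obtain ⟨C, hC⟩ := exists_norm_gaussBinom_le hq
  have hsum : Summable fun n : ℤ => ‖p ^ (n ^ 2) * x ^ n‖ := by
    simpa only [norm_mul, norm_zpow] using
      summable_zpow_sq_mul_zpow (p := ‖p‖) (x := ‖x‖) (by rwa [norm_norm])
  let f : ℕ → ℤ → K := fun N n =>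
    gaussBinom (p ^ 2) (2 * N) (n + N).toNat * (p ^ (n ^ 2) * x ^ n)
  have hlim : Tendsto (fun N : ℕ => ∑' n, (Set.Icc (-N : ℤ) N).indicator (f N) n)
      atTop (𝓝 (∑' n : ℤ, (qPochhammerInf (p ^ 2) (p ^ 2))⁻¹ * (p ^ (n ^ 2) * x ^ n))) := by
    refine tendsto_tsum_of_dominated_convergence (hsum.mul_left C) (fun n => ?_)
      (Eventually.of_forall fun N n => ?_)
    · refine ((tendsto_gaussBinom_central hq n).mul_const _).congr' ?_
      filter_upwards [eventually_ge_atTop n.natAbs] with N hN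
      have hmem : n ∈ Set.Icc (-N : ℤ) N := Set.mem_Icc.2 (by lia)
      exact (Set.indicator_of_mem hmem (f N)).symm
    · refine (norm_indicator_le_norm_self _ _).trans ?_
      rw [norm_mul]
      gcongr
      exact hC _ _
  have hfinite : ∀ N : ℕ, ∑' n, (Set.Icc (-N : ℤ) N).indicator (f N) n =
      qPochhammer (-(x * p)) (p ^ 2) N * qPochhammer (-(x⁻¹ * p)) (p ^ 2) N := fun N => by
    rw [qPochhammer_mul_qPochhammer_eq_sum_gaussBinom hp₀ hx, sum_eq_tsum_indicator,
      Finset.coe_Icc]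
  have h := tendsto_nhds_unique (hlim.congr hfinite)
    ((tendsto_qPochhammer hq _).mul (tendsto_qPochhammer hq _))
  rw [← h, tsum_mul_left, mul_right_comm, inv_mul_cancel₀ (qPochhammerInf_ne_zero hq hq), one_mul]

end JacobiTripleProduct

section Theta

/-- The theta function `(u; q)_∞ (q/u; q)_∞ (q; q)_∞` in product form. -/
noncomputable def tripleProduct {K : Type*} [NormedField K] (u q : K) : K :=
  qPochhammerInf u q * qPochhammerInf (q / u) q * qPochhammerInf q q

theorem jacobiTheta₂_eq_tripleProduct (z : ℂ) {τ : ℂ} (hτ : 0 < τ.im) :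
    jacobiTheta₂ z τ =
      tripleProduct (-(cexp (2 * Real.pi * I * z) * cexp (Real.pi * I * τ)))
        (cexp (2 * Real.pi * I * τ)) := by
  have hnome : cexp (2 * Real.pi * I * τ) = cexp (Real.pi * I * τ) ^ 2 := by
    rw [← Complex.exp_nat_mul]
    ring_nf
  have hlt : ‖cexp (Real.pi * I * τ)‖ < 1 := by
    rw [Complex.norm_exp, mul_assoc, re_ofReal_mul, I_mul_re, mul_neg]
    exact Real.exp_lt_one_iff.2 (neg_neg_of_pos (mul_pos Real.pi_pos hτ))
  have hquot : cexp (Real.pi * I * τ) ^ 2 /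
        -(cexp (2 * Real.pi * I * z) * cexp (Real.pi * I * τ)) =
      -((cexp (2 * Real.pi * I * z))⁻¹ * cexp (Real.pi * I * τ)) := by
    field_simp [Complex.exp_ne_zero]
  rw [tripleProduct, hnome, hquot, jacobi_triple_product (exp_ne_zero _) hlt (exp_ne_zero _)]
  refine tsum_congr fun n => ?_
  rw [jacobiTheta₂_term, ← exp_int_mul, ← exp_int_mul, ← exp_add]
  congr 1
  push_cast
  ring

theorem jacobiTheta₂_eq_tsum_exp_sq_sub (z τ : ℂ) :
    jacobiTheta₂ z τ =
      1 / (-I * τ) ^ (1 / 2 : ℂ) * ∑' n : ℤ, cexp (-Real.pi * I * (z - n) ^ 2 / τ) := by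
  rw [jacobiTheta₂_functional_equation, jacobiTheta₂, mul_assoc, ← tsum_mul_left]
  refine congrArg _ (tsum_congr fun n => ?_)
  rw [jacobiTheta₂_term, ← exp_add]
  ring_nf

/-- The filter of horocyclic neighbourhoods of `0`, along which `Re (1 / s) → ∞`. It contains the
intersection of any sector `|Im s| ≤ C * Re s` with neighbourhoods of `0`. -/
noncomputable def horocyclicNhds : Filter ℂ := comap (fun s => (s⁻¹).re) atTop

theorem tendsto_re_inv_horocyclicNhds :
    Tendsto (fun s : ℂ => (s⁻¹).re) horocyclicNhds atTop :=
  tendsto_comap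

theorem eventually_horocyclicNhds_re_pos : ∀ᶠ s in horocyclicNhds, 0 < s.re := by
  filter_upwards [tendsto_re_inv_horocyclicNhds.eventually_gt_atTop 0] with s hs
  rw [inv_re] at hs
  exact (div_pos_iff_of_pos_right (normSq_pos.2 fun h => by simp [h] at hs)).1 hs

theorem horocyclicNhds_le_nhds : horocyclicNhds ≤ 𝓝 0 := by
  have hinv : Tendsto (fun s : ℂ => s⁻¹) horocyclicNhds (Bornology.cobounded ℂ) :=
    tendsto_norm_atTop_iff_cobounded.1 <|
      tendsto_atTop_mono (fun s => re_le_norm s⁻¹) tendsto_re_inv_horocyclicNhds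
  have h : Tendsto (fun s : ℂ => s) horocyclicNhds (𝓝 0) := by
    simpa only [Function.comp_def, inv_inv] using tendsto_inv₀_cobounded.comp hinv
  exact h

theorem tendsto_ofReal_mul_horocyclicNhds {c : ℝ} (hc : 0 < c) :
    Tendsto (fun s : ℂ => c * s) horocyclicNhds horocyclicNhds := by
  refine tendsto_comap_iff.2 ?_
  have h := tendsto_re_inv_horocyclicNhds.const_mul_atTop (inv_pos.2 hc)
  refine h.congr fun s => ?_
  rw [Function.comp_apply, mul_inv, ← ofReal_inv, re_ofReal_mul]

theorem norm_mul_exp_neg_ofReal_div (w s : ℂ) (r : ℝ) :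
    ‖w * cexp (-(r / s))‖ = ‖w‖ * Real.exp (-(r * (s⁻¹).re)) := by
  rw [norm_mul, Complex.norm_exp, neg_re, div_eq_mul_inv, re_ofReal_mul]

theorem tendsto_mul_exp_neg_ofReal_div {r : ℝ} (hr : 0 ≤ r) (w : ℂ) :
    Tendsto (fun s : ℂ => w * cexp (-(r / s))) horocyclicNhds
      (𝓝 (if r = 0 then w else 0)) := by
  split_ifs with h
  · simp only [h, ofReal_zero, zero_div, neg_zero, exp_zero, mul_one]
    exact tendsto_const_nhds
  · rw [tendsto_zero_iff_norm_tendsto_zero]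
    simp only [norm_mul_exp_neg_ofReal_div]
    have hlim := Real.tendsto_exp_neg_atTop_nhds_zero.comp
      (tendsto_re_inv_horocyclicNhds.const_mul_atTop (lt_of_le_of_ne hr (Ne.symm h)))
    simpa only [mul_zero, Function.comp_apply] using hlim.const_mul ‖w‖

theorem tendsto_tsum_mul_exp_neg_ofReal_div {ι : Type*} {r : ι → ℝ} (hr : ∀ i, 0 ≤ r i) {w : ι → ℂ}
    (hw : Summable fun i => ‖w i‖ * Real.exp (-r i)) :
    Tendsto (fun s : ℂ => ∑' i, w i * cexp (-(r i / s))) horocyclicNhds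
      (𝓝 (∑' i, if r i = 0 then w i else 0)) := by
  refine tendsto_tsum_of_dominated_convergence hw
    (fun i => tendsto_mul_exp_neg_ofReal_div (hr i) (w i)) ?_
  filter_upwards [tendsto_re_inv_horocyclicNhds.eventually_ge_atTop 1] with s hs i
  rw [norm_mul_exp_neg_ofReal_div]
  gcongr
  exact le_mul_of_one_le_right (hr i) hs

theorem summable_exp_neg_two_pi_sq_mul (b d : ℝ) :
    Summable fun n : ℤ => Real.exp (-(2 * Real.pi ^ 2 * ((b - n) ^ 2 - d ^ 2))) := by
  have htheta := ((summable_jacobiTheta₂_term_iff (-(2 * Real.pi * b : ℝ) * I)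
    ((2 * Real.pi : ℝ) * I)).2 (by simp [Real.pi_pos])).norm
  refine (htheta.mul_left (Real.exp (2 * Real.pi ^ 2 * (d ^ 2 - b ^ 2)))).congr fun n => ?_
  rw [norm_jacobiTheta₂_term, ← Real.exp_add]
  congr 1
  simp only [neg_mul, ofReal_mul, ofReal_ofNat, mul_im, mul_re, re_ofNat, ofReal_re, im_ofNat,
    ofReal_im, mul_zero, sub_zero, I_im, mul_one, zero_mul, add_zero, I_re, neg_im, mul_neg,
    sub_neg_eq_add]
  ring

/-- `f` behaves near `0` like a theta function of weight `1 / 2` at a cusp: up to a factor `κ`, it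
is asymptotic to `(s / 2π) ^ (-1 / 2) * exp (-D / s)` (when `κ ≠ 0`). -/
def HasThetaAsymptotics (f : ℂ → ℂ) (D : ℝ) (κ : ℂ) : Prop :=
  Tendsto (fun s : ℂ => f s * (s / (2 * Real.pi)) ^ (1 / 2 : ℂ) * cexp (D / s)) horocyclicNhds
    (𝓝 κ)

/-- Only the integers closest to `b` contribute to the leading term. -/
theorem hasThetaAsymptotics_jacobiTheta₂ {b d : ℝ} (hd : ∀ n : ℤ, d ^ 2 ≤ (b - n) ^ 2) (c : ℝ) :
    HasThetaAsymptotics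
      (fun s => jacobiTheta₂ (b + I * c * s / (2 * Real.pi)) (I * s / (2 * Real.pi)))
      (2 * Real.pi ^ 2 * d ^ 2)
      (∑' n : ℤ, if (b - n) ^ 2 = d ^ 2 then cexp (-2 * Real.pi * I * c * (b - n)) else 0) := by
  have hgap : ∀ n : ℤ, 0 ≤ 2 * Real.pi ^ 2 * ((b - n) ^ 2 - d ^ 2) := fun n =>
    mul_nonneg (by positivity) (sub_nonneg.2 (hd n))
  have hsum := tendsto_tsum_mul_exp_neg_ofReal_div hgap
    (w := fun n => cexp (-2 * Real.pi * I * c * (b - n))) (by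
      have hone : ∀ n : ℤ, ‖cexp (-2 * Real.pi * I * c * (b - n))‖ = 1 := fun n => by
        rw [← norm_exp_ofReal_mul_I (-2 * Real.pi * c * (b - n))]
        push_cast
        ring_nf
      simpa only [hone, one_mul] using summable_exp_neg_two_pi_sq_mul b d)
  have hexp : Tendsto (fun s : ℂ => cexp (c ^ 2 * s / 2)) horocyclicNhds (𝓝 1) := by
    have hcont : Continuous fun s : ℂ => cexp (c ^ 2 * s / 2) := by fun_prop
    simpa using (hcont.tendsto 0).mono_left horocyclicNhds_le_nhds
  have hmul := hexp.mul hsum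
  have hcond : ∀ n : ℤ, 2 * Real.pi ^ 2 * ((b - n) ^ 2 - d ^ 2) = 0 ↔ (b - n) ^ 2 = d ^ 2 :=
    fun n => by simp [sub_eq_zero, Real.pi_ne_zero]
  simp only [one_mul, hcond] at hmul
  refine hmul.congr' ?_
  filter_upwards [eventually_horocyclicNhds_re_pos] with s hs
  have hs0 : s ≠ 0 := Complex.ne_zero_of_re_pos hs
  have hpi : (Real.pi : ℂ) ≠ 0 := ofReal_ne_zero.2 Real.pi_ne_zero
  have hroot : (s / (2 * Real.pi)) ^ (1 / 2 : ℂ) ≠ 0 := by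
    simp [cpow_eq_zero_iff, hs0, hpi]
  have hτ : -I * (I * s / (2 * Real.pi)) = s / (2 * Real.pi) := by
    linear_combination -(s / (2 * Real.pi)) * I_mul_I
  rw [jacobiTheta₂_eq_tsum_exp_sq_sub, hτ, one_div_mul_eq_div, div_mul_cancel₀ _ hroot,
    ← tsum_mul_left, ← tsum_mul_right]
  refine tsum_congr fun n => ?_
  rw [← exp_add, ← exp_add, ← exp_add]
  congr 1
  push_cast
  field_simp
  ring_nf
  simp only [I_sq]
  ring

end Theta

section TripleProductAsymptotics

theorem exp_two_pi_I_mul_I_mul_div (s : ℂ) :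
    cexp (2 * Real.pi * I * (I * s / (2 * Real.pi))) = cexp (-s) := by
  congr 1
  have hpi : (Real.pi : ℂ) ≠ 0 := ofReal_ne_zero.2 Real.pi_ne_zero
  field_simp
  linear_combination s * I_sq

theorem jacobiTheta₂_eq_tripleProduct_exp (φ a : ℝ) {s : ℂ} (hs : 0 < s.re) :
    jacobiTheta₂ ((φ / (2 * Real.pi) : ℝ) + I * (a - 1 / 2 : ℝ) * s / (2 * Real.pi))
        (I * s / (2 * Real.pi)) =
      tripleProduct (-cexp (φ * I - a * s)) (cexp (-s)) := by
  have hpi : (Real.pi : ℂ) ≠ 0 := ofReal_ne_zero.2 Real.pi_ne_zero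
  have hτ : 0 < (I * s / (2 * Real.pi)).im := by
    have : I * s / (2 * Real.pi) = ((2 * Real.pi)⁻¹ : ℝ) * (I * s) := by
      push_cast
      field_simp
    rw [this, im_ofReal_mul, I_mul_im]
    exact mul_pos (inv_pos.2 Real.two_pi_pos) hs
  rw [jacobiTheta₂_eq_tripleProduct _ hτ, exp_two_pi_I_mul_I_mul_div, ← exp_add]
  congr 3
  push_cast
  field_simp
  ring_nf
  simp only [I_sq]
  ring

theorem hasThetaAsymptotics_tripleProduct_neg_exp {φ : ℝ} (hφ : |φ| < Real.pi) (a : ℝ) :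
    HasThetaAsymptotics (fun s => tripleProduct (-cexp (φ * I - a * s)) (cexp (-s))) (φ ^ 2 / 2)
      (cexp (-((a - 1 / 2) * φ * I))) := by
  have hpi : (Real.pi : ℂ) ≠ 0 := ofReal_ne_zero.2 Real.pi_ne_zero
  set b : ℝ := φ / (2 * Real.pi) with hb
  have hb2 : |2 * b| < 1 := by
    have h2b : 2 * b = φ / Real.pi := by
      rw [hb]
      field_simp
    rw [h2b, abs_div, abs_of_pos Real.pi_pos]
    exact (div_lt_one Real.pi_pos).2 hφ
  have hne : ∀ n : ℤ, n ≠ 0 → b ^ 2 < (b - n) ^ 2 := fun n hn => by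
    have h1 : (1 : ℝ) ≤ |(n : ℝ)| := by exact_mod_cast Int.one_le_abs hn
    have h2 : 2 * b * n < (n : ℝ) ^ 2 := by
      rw [← sq_abs (n : ℝ), sq]
      exact (le_abs_self _).trans_lt (by rw [abs_mul]; nlinarith)
    linarith
  have h := hasThetaAsymptotics_jacobiTheta₂ (b := b) (d := b) (fun n => by
    rcases eq_or_ne n 0 with rfl | hn
    · simp
    · exact (hne n hn).le) (a - 1 / 2)
  rw [tsum_eq_single 0 fun n hn => if_neg (hne n hn).ne', Int.cast_zero, sub_zero, if_pos rfl] at h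
  have hval : -2 * Real.pi * I * ((a - 1 / 2 : ℝ) : ℂ) * (b - (0 : ℤ)) =
      -((a - 1 / 2) * φ * I) := by
    rw [hb]
    push_cast
    field_simp
    ring
  rw [hval] at h
  refine h.congr' ?_
  filter_upwards [eventually_horocyclicNhds_re_pos] with s hs
  rw [hb, jacobiTheta₂_eq_tripleProduct_exp φ a hs]
  congr 3
  push_cast
  field_simp

theorem half_sq_le_half_sub_intCast_sq (n : ℤ) : (1 / 2 : ℝ) ^ 2 ≤ (1 / 2 - n) ^ 2 := by
  have h : 0 ≤ n * (n - 1) := by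
    rcases le_or_gt n 0 with h | h
    · exact mul_nonneg_of_nonpos_of_nonpos h (by lia)
    · exact mul_nonneg h.le (by lia)
  have h' : (0 : ℝ) ≤ n * (n - 1) := by exact_mod_cast h
  linarith

theorem half_sub_intCast_sq_eq_iff (n : ℤ) :
    (1 / 2 - n : ℝ) ^ 2 = (1 / 2) ^ 2 ↔ n ∈ ({0, 1} : Finset ℤ) := by
  have h : (1 / 2 - n : ℝ) ^ 2 = (1 / 2) ^ 2 ↔ (n : ℝ) * (n - 1) = 0 :=
    ⟨fun h => by linear_combination h, fun h => by linear_combination h⟩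
  rw [h, mul_eq_zero, sub_eq_zero, Finset.mem_insert, Finset.mem_singleton]
  norm_cast

theorem hasThetaAsymptotics_tripleProduct_exp (a : ℝ) :
    HasThetaAsymptotics (fun s => tripleProduct (cexp (-(a * s))) (cexp (-s))) (Real.pi ^ 2 / 2)
      (2 * Real.sin (Real.pi * a) : ℝ) := by
  have h := hasThetaAsymptotics_jacobiTheta₂ half_sq_le_half_sub_intCast_sq (a - 1 / 2)
  simp only [half_sub_intCast_sq_eq_iff] at h
  have hval : (∑' n : ℤ, if n ∈ ({0, 1} : Finset ℤ) then
      cexp (-2 * Real.pi * I * ((a - 1 / 2 : ℝ) : ℂ) * ((1 / 2 : ℝ) - n)) else 0) =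
      (2 * Real.sin (Real.pi * a) : ℝ) := by
    rw [tsum_eq_sum fun n hn => if_neg hn, Finset.sum_ite_of_true fun n hn => hn,
      Finset.sum_pair zero_ne_one, ← Real.cos_pi_div_two_sub, ofReal_mul, ofReal_ofNat,
      ofReal_cos, two_cos]
    congr 2 <;> push_cast <;> ring
  rw [hval] at h
  refine h.congr' ?_
  filter_upwards [eventually_horocyclicNhds_re_pos] with s hs
  have hu : -cexp (Real.pi * I - a * s) = cexp (-(a * s)) := by
    rw [sub_eq_add_neg, exp_add, exp_pi_mul_I, neg_one_mul, neg_neg]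
  have hhalf : Real.pi / (2 * Real.pi) = 1 / 2 := by
    field_simp [Real.pi_ne_zero]
  rw [← hu, ← jacobiTheta₂_eq_tripleProduct_exp Real.pi a hs, hhalf]
  congr 2
  push_cast
  ring

theorem qPochhammerInf_self_eq_tripleProduct {q : ℂ} (hq : ‖q‖ < 1) (hq0 : q ≠ 0) :
    qPochhammerInf q q = tripleProduct q (q ^ 3) := by
  rw [qPochhammerInf_eq_prod_residues hq q three_ne_zero, Finset.prod_range_succ,
    Finset.prod_range_succ, Finset.prod_range_one, tripleProduct, pow_zero, mul_one, pow_one,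
    ← pow_two, ← pow_succ', pow_succ q 2, mul_div_cancel_right₀ _ hq0]

theorem norm_exp_neg_lt_one {s : ℂ} (hs : 0 < s.re) : ‖cexp (-s)‖ < 1 := by
  rw [Complex.norm_exp, neg_re]
  exact Real.exp_lt_one_iff.2 (neg_neg_of_pos hs)

theorem ofReal_mul_cpow_of_pos {r : ℝ} (hr : 0 < r) (z w : ℂ) :
    (r * z) ^ w = (r : ℂ) ^ w * z ^ w := by
  rcases eq_or_ne z 0 with rfl | hz
  · rcases eq_or_ne w 0 with rfl | hw
    · simp
    · simp [zero_cpow hw]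
  · have hr0 : (r : ℂ) ≠ 0 := ofReal_ne_zero.2 hr.ne'
    rw [cpow_def_of_ne_zero (mul_ne_zero hr0 hz), cpow_def_of_ne_zero hr0, cpow_def_of_ne_zero hz,
      log_ofReal_mul hr hz, ofReal_log hr.le, add_mul, exp_add]

theorem hasThetaAsymptotics_qPochhammerInf_exp :
    HasThetaAsymptotics (fun s => qPochhammerInf (cexp (-s)) (cexp (-s))) (Real.pi ^ 2 / 6) 1 := by
  have hroot : ((3 : ℝ) : ℂ) ^ (1 / 2 : ℂ) = Real.sqrt 3 := by
    rw [Real.sqrt_eq_rpow, ofReal_cpow three_pos.le, ofReal_div, ofReal_one, ofReal_ofNat]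
    push_cast
    rfl
  have hsqrt : (Real.sqrt 3 : ℂ) ≠ 0 := ofReal_ne_zero.2 (Real.sqrt_pos.2 three_pos).ne'
  have hval : 2 * Real.sin (Real.pi * (1 / 3)) = Real.sqrt 3 := by
    rw [mul_one_div, Real.sin_pi_div_three]
    ring
  have h := (Tendsto.comp (hasThetaAsymptotics_tripleProduct_exp (1 / 3))
    (tendsto_ofReal_mul_horocyclicNhds three_pos)).div_const (Real.sqrt 3 : ℂ)
  rw [hval, div_self hsqrt] at h
  refine h.congr' ?_
  filter_upwards [eventually_horocyclicNhds_re_pos] with s hs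
  have h1 : -(((1 / 3 : ℝ) : ℂ) * ((3 : ℝ) * s)) = -s := by
    push_cast
    ring
  have h3 : cexp (-((3 : ℝ) * s)) = cexp (-s) ^ 3 := by
    rw [← exp_nat_mul]
    congr 1
    push_cast
    ring
  have hexp : ((Real.pi ^ 2 / 2 : ℝ) : ℂ) / ((3 : ℝ) * s) = (Real.pi ^ 2 / 6 : ℝ) / s := by
    push_cast
    ring
  rw [Function.comp_apply, h1, h3, ← qPochhammerInf_self_eq_tripleProduct (norm_exp_neg_lt_one hs)
    (exp_ne_zero _), hexp, mul_div_assoc ((3 : ℝ) : ℂ), ofReal_mul_cpow_of_pos three_pos, hroot]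
  field_simp

end TripleProductAsymptotics

section TangProduct

theorem HasThetaAsymptotics.tendsto_div {f g : ℂ → ℂ} {D D' : ℝ} {κ κ' : ℂ}
    (hf : HasThetaAsymptotics f D κ) (hg : HasThetaAsymptotics g D' κ') (hκ' : κ' ≠ 0) :
    Tendsto (fun s => f s / g s * cexp ((D - D') / s)) horocyclicNhds (𝓝 (κ / κ')) := by
  refine (Tendsto.div hf hg hκ').congr' ?_
  filter_upwards [eventually_horocyclicNhds_re_pos] with s hs
  have hs0 : s ≠ 0 := Complex.ne_zero_of_re_pos hs
  have hroot : (s / (2 * Real.pi)) ^ (1 / 2 : ℂ) ≠ 0 := by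
    simp [cpow_eq_zero_iff, hs0, Real.pi_ne_zero]
  rw [Pi.div_apply, mul_div_mul_comm, ← exp_sub, ← sub_div, mul_div_mul_right _ _ hroot]

/-- The infinite product `(q², q⁸; q¹⁰)_∞ (q⁴, q⁶; q¹⁰)²_∞ / (q², q³; q⁵)²_∞`. -/
noncomputable def tangProduct (q : ℂ) : ℂ :=
  qPochhammerInf (q ^ 2) (q ^ 10) * qPochhammerInf (q ^ 8) (q ^ 10) *
      (qPochhammerInf (q ^ 4) (q ^ 10) * qPochhammerInf (q ^ 6) (q ^ 10)) ^ 2 /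
    (qPochhammerInf (q ^ 2) (q ^ 5) * qPochhammerInf (q ^ 3) (q ^ 5)) ^ 2

variable {q : ℂ}

theorem norm_pow_lt_one (hq : ‖q‖ < 1) {n : ℕ} (hn : n ≠ 0) : ‖q ^ n‖ < 1 := by
  rw [norm_pow]
  exact pow_lt_one₀ (norm_nonneg q) hq hn

theorem tprod_one_sub_pow_mul_one_sub_pow (hq : ‖q‖ < 1) {M : ℕ} (hM : M ≠ 0) (a b : ℕ) :
    ∏' k : ℕ, (1 - q ^ (M * k + a)) * (1 - q ^ (M * k + b)) =
      qPochhammerInf (q ^ a) (q ^ M) * qPochhammerInf (q ^ b) (q ^ M) := by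
  have hqM := norm_pow_lt_one hq hM
  rw [qPochhammerInf, qPochhammerInf,
    ← (multipliable_one_sub_mul_pow hqM _).tprod_mul (multipliable_one_sub_mul_pow hqM _)]
  simp only [← pow_mul, ← pow_add, add_comm]

theorem tprod_eq_tangProduct (hq : ‖q‖ < 1) :
    (∏' k : ℕ, (1 - q ^ (10 * k + 2)) * (1 - q ^ (10 * k + 8))) *
        (∏' k : ℕ, (1 - q ^ (10 * k + 4)) * (1 - q ^ (10 * k + 6))) ^ 2 *
        (∏' k : ℕ, (1 - q ^ (5 * k + 2)) * (1 - q ^ (5 * k + 3))) ^ (-2 : ℤ) =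
      tangProduct q := by
  rw [tprod_one_sub_pow_mul_one_sub_pow hq (by norm_num),
    tprod_one_sub_pow_mul_one_sub_pow hq (by norm_num),
    tprod_one_sub_pow_mul_one_sub_pow hq (by norm_num), zpow_neg, zpow_ofNat, ← div_eq_mul_inv,
    tangProduct]

theorem qPochhammerInf_pow_five (hq : ‖q‖ < 1) (a : ℕ) :
    qPochhammerInf (q ^ a) (q ^ 5) =
      qPochhammerInf (q ^ a) (q ^ 10) * qPochhammerInf (q ^ (a + 5)) (q ^ 10) := by
  rw [qPochhammerInf_eq_prod_residues (norm_pow_lt_one hq (by norm_num)) _ two_ne_zero,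
    Finset.prod_range_succ, Finset.prod_range_one, pow_zero, mul_one, pow_one, ← pow_add,
    ← pow_mul]

theorem qPochhammerInf_pow_ne_zero (hq : ‖q‖ < 1) {a M : ℕ} (ha : a ≠ 0) (hM : M ≠ 0) :
    qPochhammerInf (q ^ a) (q ^ M) ≠ 0 :=
  qPochhammerInf_ne_zero (norm_pow_lt_one hq hM) (norm_pow_lt_one hq ha)

theorem tangProduct_eq (hq : ‖q‖ < 1) :
    tangProduct q =
      (qPochhammerInf (q ^ 4) (q ^ 10) * qPochhammerInf (q ^ 6) (q ^ 10)) ^ 2 /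
        (qPochhammerInf (q ^ 2) (q ^ 10) * qPochhammerInf (q ^ 8) (q ^ 10) *
          (qPochhammerInf (q ^ 3) (q ^ 10) * qPochhammerInf (q ^ 7) (q ^ 10)) ^ 2) := by
  have hne : ∀ a ≠ 0, qPochhammerInf (q ^ a) (q ^ 10) ≠ 0 := fun a ha =>
    qPochhammerInf_pow_ne_zero hq ha (by norm_num)
  have h2 := hne 2 (by norm_num)
  have h3 := hne 3 (by norm_num)
  have h7 := hne 7 (by norm_num)
  have h8 := hne 8 (by norm_num)
  rw [tangProduct, qPochhammerInf_pow_five hq 2, qPochhammerInf_pow_five hq 3]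
  field_simp

theorem tripleProduct_pow (hq0 : q ≠ 0) {a M : ℕ} (ha : a ≤ M) :
    tripleProduct (q ^ a) (q ^ M) =
      qPochhammerInf (q ^ a) (q ^ M) * qPochhammerInf (q ^ (M - a)) (q ^ M) *
        qPochhammerInf (q ^ M) (q ^ M) := by
  rw [tripleProduct, pow_sub₀ q hq0 ha, div_eq_mul_inv]

theorem tangProduct_eq_tripleProduct (hq : ‖q‖ < 1) (hq0 : q ≠ 0) :
    tangProduct q =
      tripleProduct (q ^ 4) (q ^ 10) ^ 2 * qPochhammerInf (q ^ 10) (q ^ 10) /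
        (tripleProduct (q ^ 2) (q ^ 10) * tripleProduct (q ^ 3) (q ^ 10) ^ 2) := by
  have hE : qPochhammerInf (q ^ 10) (q ^ 10) ≠ 0 :=
    qPochhammerInf_pow_ne_zero hq (by norm_num) (by norm_num)
  rw [tangProduct_eq hq, tripleProduct_pow hq0 (by norm_num), tripleProduct_pow hq0 (by norm_num),
    tripleProduct_pow hq0 (by norm_num)]
  norm_num only
  field_simp

theorem tendsto_tangProduct_of_hasThetaAsymptotics {ζ : ℂ} (hζ : ζ ^ 10 = 1) {φ₂ φ₃ φ₄ : ℝ}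
    (hφ : φ₂ ^ 2 + 2 * φ₃ ^ 2 - 2 * φ₄ ^ 2 = Real.pi ^ 2) {κ₂ κ₃ κ₄ : ℂ} (hκ₂ : κ₂ ≠ 0)
    (hκ₃ : κ₃ ≠ 0)
    (h₂ : HasThetaAsymptotics
      (fun s => tripleProduct (ζ ^ 2 * cexp (-((2 / 10 : ℝ) * s))) (cexp (-s))) (φ₂ ^ 2 / 2) κ₂)
    (h₃ : HasThetaAsymptotics
      (fun s => tripleProduct (ζ ^ 3 * cexp (-((3 / 10 : ℝ) * s))) (cexp (-s))) (φ₃ ^ 2 / 2) κ₃)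
    (h₄ : HasThetaAsymptotics
      (fun s => tripleProduct (ζ ^ 4 * cexp (-((4 / 10 : ℝ) * s))) (cexp (-s))) (φ₄ ^ 2 / 2) κ₄) :
    Tendsto (fun s => tangProduct (ζ * cexp (-s)) * cexp (-((Real.pi ^ 2 / 30 : ℝ) / s)))
      horocyclicNhds (𝓝 (κ₄ ^ 2 / (κ₂ * κ₃ ^ 2))) := by
  have h := (((h₄.tendsto_div h₂ hκ₂).mul (h₄.tendsto_div h₃ hκ₃)).mul
    (hasThetaAsymptotics_qPochhammerInf_exp.tendsto_div h₃ hκ₃)).comp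
    (tendsto_ofReal_mul_horocyclicNhds (c := 10) (by norm_num))
  rw [show κ₄ / κ₂ * (κ₄ / κ₃) * (1 / κ₃) = κ₄ ^ 2 / (κ₂ * κ₃ ^ 2) by field_simp] at h
  refine h.congr' ?_
  filter_upwards [eventually_horocyclicNhds_re_pos] with s hs
  have hζ1 : ‖ζ‖ = 1 := Complex.norm_eq_one_of_pow_eq_one hζ (by norm_num)
  have hζ0 : ζ ≠ 0 := norm_ne_zero_iff.1 (hζ1.trans_ne one_ne_zero)
  have hpow (a : ℕ) {r : ℝ} (hr : 10 * r = a) :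
      ζ ^ a * cexp (-(r * ((10 : ℝ) * s))) = (ζ * cexp (-s)) ^ a := by
    rw [mul_pow, ← exp_nat_mul, ← ofReal_natCast, ← hr]
    congr 2
    push_cast
    ring
  have hpow10 : cexp (-((10 : ℝ) * s)) = (ζ * cexp (-s)) ^ 10 := by
    simpa [hζ] using hpow 10 (r := 1) (by norm_num)
  have hlt : ‖ζ * cexp (-s)‖ < 1 := by
    rw [norm_mul, hζ1, one_mul]
    exact norm_exp_neg_lt_one hs
  have hexp : cexp (-((Real.pi ^ 2 / 30 : ℝ) / s)) =
      cexp (((φ₄ ^ 2 / 2 : ℝ) - (φ₂ ^ 2 / 2 : ℝ)) / ((10 : ℝ) * s)) *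
          cexp (((φ₄ ^ 2 / 2 : ℝ) - (φ₃ ^ 2 / 2 : ℝ)) / ((10 : ℝ) * s)) *
        cexp (((Real.pi ^ 2 / 6 : ℝ) - (φ₃ ^ 2 / 2 : ℝ)) / ((10 : ℝ) * s)) := by
    have hφ' : (φ₂ : ℂ) ^ 2 + 2 * φ₃ ^ 2 - 2 * φ₄ ^ 2 = Real.pi ^ 2 := by exact_mod_cast hφ
    rw [← exp_add, ← exp_add]
    congr 1
    push_cast
    linear_combination s⁻¹ / 20 * hφ'
  simp only [Function.comp_apply]
  rw [hpow 2 (by norm_num), hpow 3 (by norm_num), hpow 4 (by norm_num), hpow10, hexp,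
    tangProduct_eq_tripleProduct hlt (mul_ne_zero hζ0 (exp_ne_zero _))]
  field_simp

theorem tendsto_tangProduct_exp_neg :
    Tendsto (fun s => tangProduct (cexp (-s)) * cexp (-((Real.pi ^ 2 / 30 : ℝ) / s)))
      horocyclicNhds (𝓝 (2 * Real.sin (Real.pi / 5) : ℝ)) := by
  have hpi := Real.pi_pos
  have hsin : 0 < Real.sin (Real.pi / 5) :=
    Real.sin_pos_of_pos_of_lt_pi (by positivity) (by linarith)
  have hcos : 0 < Real.cos (Real.pi / 5) := Real.cos_pos_of_mem_Ioo ⟨by linarith, by linarith⟩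
  have h2 : Real.sin (Real.pi * (2 / 10)) = Real.sin (Real.pi / 5) := by ring_nf
  have h3 : Real.sin (Real.pi * (3 / 10)) = Real.cos (Real.pi / 5) := by
    rw [← Real.cos_pi_div_two_sub]
    ring_nf
  have h4 : Real.sin (Real.pi * (4 / 10)) =
      2 * Real.sin (Real.pi / 5) * Real.cos (Real.pi / 5) := by
    rw [← Real.sin_two_mul]
    ring_nf
  have htheta (a : ℕ) (r : ℝ) : HasThetaAsymptotics
      (fun s => tripleProduct (1 ^ a * cexp (-(r * s))) (cexp (-s))) (Real.pi ^ 2 / 2)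
      (2 * Real.sin (Real.pi * r) : ℝ) := by
    simpa only [one_pow, one_mul] using hasThetaAsymptotics_tripleProduct_exp r
  have h := tendsto_tangProduct_of_hasThetaAsymptotics (one_pow 10) (by ring)
    (ofReal_ne_zero.2 (by rw [h2]; positivity)) (ofReal_ne_zero.2 (by rw [h3]; positivity))
    (htheta 2 (2 / 10)) (htheta 3 (3 / 10)) (htheta 4 (4 / 10))
  simp only [one_mul] at h
  convert h using 2
  rw [h2, h3, h4]
  norm_cast
  field_simp

theorem exp_mul_pi_mul_I_of_abs_eq_one {σ : ℝ} (hσ : |σ| = 1) :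
    cexp ((σ * Real.pi : ℝ) * I) = -1 := by
  rcases (abs_eq zero_le_one).1 hσ with rfl | rfl
  · rw [one_mul, exp_pi_mul_I]
  · rw [neg_one_mul, ofReal_neg, neg_mul, exp_neg, exp_pi_mul_I, inv_neg, inv_one]

theorem exp_four_pi_div_five_pow_eq_neg {σ : ℝ} (hσ : |σ| = 1) {a k : ℕ} {r : ℝ}
    (ha : (a : ℝ) * (4 / 5) = r + (2 * k + 1)) :
    cexp ((σ * (4 * Real.pi / 5) : ℝ) * I) ^ a = -cexp ((σ * (r * Real.pi) : ℝ) * I) := by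
  have hodd : cexp ((σ * Real.pi : ℝ) * I) ^ (2 * k + 1) = -1 := by
    rw [exp_mul_pi_mul_I_of_abs_eq_one hσ, pow_succ, pow_mul, neg_one_sq, one_pow, one_mul]
  rw [← mul_neg_one, ← hodd, ← exp_nat_mul, ← exp_nat_mul, ← exp_add]
  congr 1
  have ha' := congrArg ofReal ha
  push_cast at ha'
  push_cast
  linear_combination σ * Real.pi * I * ha'

theorem tendsto_tangProduct_exp_four_pi_div_five {σ : ℝ} (hσ : |σ| = 1) :
    Tendsto (fun s => tangProduct (cexp ((σ * (4 * Real.pi / 5) : ℝ) * I) * cexp (-s)) *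
        cexp (-((Real.pi ^ 2 / 30 : ℝ) / s)))
      horocyclicNhds (𝓝 (cexp ((σ * (Real.pi / 10) : ℝ) * I))) := by
  set ζ := cexp ((σ * (4 * Real.pi / 5) : ℝ) * I) with hζ
  have htheta (a k : ℕ) (r : ℝ) (hr : |r| < 1) (ha : (a : ℝ) * (4 / 5) = r + (2 * k + 1)) :
      HasThetaAsymptotics (fun s => tripleProduct (ζ ^ a * cexp (-((a / 10 : ℝ) * s))) (cexp (-s)))
        ((σ * (r * Real.pi)) ^ 2 / 2)
        (cexp (-((((a / 10 : ℝ) : ℂ) - 1 / 2) * (σ * (r * Real.pi) : ℝ) * I))) := by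
    have h := hasThetaAsymptotics_tripleProduct_neg_exp (φ := σ * (r * Real.pi)) (by
      rw [abs_mul, hσ, one_mul, abs_mul, abs_of_pos Real.pi_pos]
      exact mul_lt_of_lt_one_left Real.pi_pos hr) (a / 10)
    simpa only [hζ, exp_four_pi_div_five_pow_eq_neg hσ ha, sub_eq_add_neg, exp_add, neg_mul] using h
  have h := tendsto_tangProduct_of_hasThetaAsymptotics (ζ := ζ) ?_ ?_ (exp_ne_zero _)
    (exp_ne_zero _) (by exact_mod_cast htheta 2 0 (3 / 5) (by norm_num [abs_lt]) (by norm_num))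
    (by exact_mod_cast htheta 3 1 (-(3 / 5)) (by norm_num [abs_lt]) (by norm_num))
    (by exact_mod_cast htheta 4 1 (1 / 5) (by norm_num [abs_lt]) (by norm_num))
  · convert h using 2
    rw [← exp_nat_mul, ← exp_nat_mul, ← exp_add, ← exp_sub]
    congr 1
    push_cast
    ring
  · have h8 : ζ ^ 10 = cexp ((σ * Real.pi : ℝ) * I) ^ 8 := by
      rw [hζ, ← exp_nat_mul, ← exp_nat_mul]
      congr 1
      push_cast
      ring
    rw [h8, exp_mul_pi_mul_I_of_abs_eq_one hσ]
    norm_num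
  · linear_combination Real.pi ^ 2 * (by rw [← sq_abs, hσ, one_pow] : σ ^ 2 = 1)

end TangProduct

section LambertSeries

/-- The Lambert series `∑ aᵐ / (m (1 - qᵐ))`, which is `-log (a; q)_∞`. The term `m = 0` vanishes
because of the division by zero. -/
noncomputable def qPochhammerLambert (a q : ℂ) : ℂ := ∑' m : ℕ, a ^ m / (m * (1 - q ^ m))

variable {a q : ℂ}

theorem summable_mul_pow_pow_div (ha : ‖a‖ < 1) (hq : ‖q‖ < 1) :
    Summable fun p : ℕ × ℕ => (a * q ^ p.1) ^ p.2 / (p.2 : ℂ) := by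
  have hgeom := (summable_geometric_of_lt_one (norm_nonneg q) hq).mul_of_nonneg
    (summable_geometric_of_lt_one (norm_nonneg a) ha) (fun _ => by positivity)
    (fun _ => by positivity)
  refine Summable.of_norm_bounded hgeom ?_
  rintro ⟨k, m⟩
  rcases Nat.eq_zero_or_pos m with rfl | hm
  · simp
  have hpow : (‖q‖ ^ k) ^ m ≤ ‖q‖ ^ k :=
    pow_le_of_le_one (by positivity) (pow_le_one₀ (norm_nonneg q) hq.le) hm.ne'
  calc ‖(a * q ^ k) ^ m / (m : ℂ)‖ = ‖a‖ ^ m * (‖q‖ ^ k) ^ m / m := by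
        rw [norm_div, norm_natCast, norm_pow, norm_mul, norm_pow, mul_pow]
    _ ≤ ‖a‖ ^ m * (‖q‖ ^ k) ^ m := div_le_self (by positivity) (by exact_mod_cast hm)
    _ ≤ ‖q‖ ^ k * ‖a‖ ^ m := by
        rw [mul_comm]
        gcongr

theorem hasSum_mul_pow_pow_div (a : ℂ) (hq : ‖q‖ < 1) (m : ℕ) :
    HasSum (fun k : ℕ => (a * q ^ k) ^ m / (m : ℂ)) (a ^ m / (m * (1 - q ^ m))) := by
  rcases eq_or_ne m 0 with rfl | hm
  · simp
  have hgeom := (hasSum_geometric_of_norm_lt_one (norm_pow_lt_one hq hm)).mul_left (a ^ m / m)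
  rw [← div_eq_mul_inv, div_div] at hgeom
  refine hgeom.congr_fun fun k => ?_
  rw [mul_pow, pow_right_comm, mul_div_right_comm]

theorem qPochhammerInf_eq_exp_neg_lambert (ha : ‖a‖ < 1) (hq : ‖q‖ < 1) :
    qPochhammerInf a q = cexp (-qPochhammerLambert a q) := by
  have hsum := summable_mul_pow_pow_div ha hq
  have hlt (k : ℕ) : ‖a * q ^ k‖ < 1 := by
    rw [norm_mul, norm_pow]
    exact mul_lt_one_of_nonneg_of_lt_one_left (norm_nonneg a) ha (pow_le_one₀ (norm_nonneg q) hq.le)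
  have hlog (k : ℕ) := (hasSum_taylorSeries_neg_log (hlt k)).tsum_eq
  have hsumlog : Summable fun k : ℕ => log (1 - a * q ^ k) := by
    simpa only [hlog, summable_neg_iff] using hsum.prod
  have hswap := hsum.tsum_comm (f := fun k m : ℕ => (a * q ^ k) ^ m / (m : ℂ))
  simp only [hlog, (hasSum_mul_pow_pow_div a hq _).tsum_eq, tsum_neg] at hswap
  rw [qPochhammerLambert, hswap, neg_neg, qPochhammerInf]
  exact (cexp_tsum_eq_tprod (fun k => one_sub_mul_pow_ne_zero hq ha k) hsumlog).symm

end LambertSeries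

section RadialBehaviour

/-- The coefficient of `1 / s` in `qPochhammerLambert ((ζ * exp (-s)) ^ a) ((ζ * exp (-s)) ^ M)` as
`s → 0`. -/
noncomputable def lambertCuspCoeff (a M : ℕ) (ζ : ℂ) : ℂ :=
  ∑' m : ℕ, if (ζ ^ M) ^ m = 1 then (ζ ^ a) ^ m / (M * m ^ 2) else 0

theorem tendsto_div_one_sub_exp_neg_mul {c : ℂ} (hc : c ≠ 0) :
    Tendsto (fun s : ℂ => s / (1 - cexp (-(c * s)))) (𝓝[≠] 0) (𝓝 c⁻¹) := by
  have hderiv : HasDerivAt (fun s : ℂ => 1 - cexp (-(c * s))) c 0 := by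
    simpa using (((hasDerivAt_id (0 : ℂ)).const_mul c).neg.cexp).const_sub 1
  have hslope := hderiv.tendsto_slope_zero.inv₀ hc
  simpa [div_eq_mul_inv, mul_comm] using hslope

variable {ζ : ℂ} {a M : ℕ}

theorem tendsto_mul_lambert_term (hM : M ≠ 0) {m : ℕ} (hm : m ≠ 0) :
    Tendsto (fun s : ℂ => s * (((ζ * cexp (-s)) ^ a) ^ m / (m * (1 - ((ζ * cexp (-s)) ^ M) ^ m))))
      (𝓝[≠] 0) (𝓝 (if (ζ ^ M) ^ m = 1 then (ζ ^ a) ^ m / (M * m ^ 2) else 0)) := by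
  have hm' : (m : ℂ) ≠ 0 := Nat.cast_ne_zero.2 hm
  have hM' : (M : ℂ) ≠ 0 := Nat.cast_ne_zero.2 hM
  have hpow (b : ℕ) : Tendsto (fun s : ℂ => ((ζ * cexp (-s)) ^ b) ^ m) (𝓝[≠] 0)
      (𝓝 ((ζ ^ b) ^ m)) := by
    have hcont : Continuous fun s : ℂ => ((ζ * cexp (-s)) ^ b) ^ m := by fun_prop
    simpa using (hcont.tendsto 0).mono_left nhdsWithin_le_nhds
  split_ifs with h
  · have hdenom (s : ℂ) : ((ζ * cexp (-s)) ^ M) ^ m = cexp (-(M * m * s)) := by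
      rw [mul_pow, mul_pow, h, one_mul, ← exp_nat_mul, ← exp_nat_mul]
      congr 1
      ring
    have hlim := ((hpow a).div_const (m : ℂ)).mul
      (tendsto_div_one_sub_exp_neg_mul (mul_ne_zero hM' hm'))
    have hval : (ζ ^ a) ^ m / m * (M * m : ℂ)⁻¹ = (ζ ^ a) ^ m / (M * m ^ 2) := by
      field_simp
    rw [hval] at hlim
    refine hlim.congr fun s => ?_
    rw [hdenom, div_mul_div_comm, mul_comm _ s, mul_div_assoc]
  · have hdenom : (m : ℂ) * (1 - (ζ ^ M) ^ m) ≠ 0 :=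
      mul_ne_zero hm' (sub_ne_zero.2 (Ne.symm h))
    have hlim := (tendsto_id.mono_left nhdsWithin_le_nhds).mul
      ((hpow a).div (((hpow M).const_sub 1).const_mul (m : ℂ)) hdenom)
    simpa using hlim

theorem mul_exp_neg_le_one_sub_exp_neg_pow (t : ℝ) (ht : 0 ≤ t) (hM : M ≠ 0) :
    t * Real.exp (-t) ≤ 1 - Real.exp (-t) ^ M := by
  have hpow : Real.exp (-t) ^ M ≤ Real.exp (-t) :=
    pow_le_of_le_one (Real.exp_pos _).le (Real.exp_le_one_iff.2 (neg_nonpos.2 ht)) hM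
  have hexp : (t + 1) * Real.exp (-t) ≤ 1 := by
    rw [Real.exp_neg, ← div_eq_mul_inv, div_le_one (Real.exp_pos t)]
    exact Real.add_one_le_exp t
  linarith

theorem re_mul_norm_lambert_term_le (hζ : ‖ζ‖ = 1) (ha : a ≠ 0) (hM : M ≠ 0) {s : ℂ}
    (hs : 0 < s.re) (m : ℕ) :
    s.re * ‖((ζ * cexp (-s)) ^ a) ^ m / (m * (1 - ((ζ * cexp (-s)) ^ M) ^ m))‖ ≤
      1 / (m : ℝ) ^ 2 := by
  rcases Nat.eq_zero_or_pos m with rfl | hm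
  · simp
  have hm' : (0 : ℝ) < m := Nat.cast_pos.2 hm
  have ht : 0 < m * s.re := mul_pos hm' hs
  set r := Real.exp (-(m * s.re))
  have hnorm (b : ℕ) : ‖((ζ * cexp (-s)) ^ b) ^ m‖ = r ^ b := by
    rw [pow_right_comm, norm_pow, norm_pow, norm_mul, hζ, one_mul, Complex.norm_exp,
      ← Real.exp_nat_mul, neg_re, mul_neg]
  have hr1 : r < 1 := Real.exp_lt_one_iff.2 (neg_neg_of_pos ht)
  have hden : 0 < 1 - r ^ M := sub_pos.2 (pow_lt_one₀ (Real.exp_pos _).le hr1 hM)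
  have hden_le : 1 - r ^ M ≤ ‖1 - ((ζ * cexp (-s)) ^ M) ^ m‖ := by
    simpa only [norm_one, hnorm] using norm_sub_norm_le (1 : ℂ) (((ζ * cexp (-s)) ^ M) ^ m)
  rw [norm_div, norm_mul, norm_natCast, hnorm]
  calc s.re * (r ^ a / (m * ‖1 - ((ζ * cexp (-s)) ^ M) ^ m‖))
      ≤ s.re * (r / (m * (1 - r ^ M))) := by
        gcongr
        exact pow_le_of_le_one (Real.exp_pos _).le hr1.le ha
    _ = m * s.re * r / (1 - r ^ M) / m ^ 2 := by field_simp
    _ ≤ 1 / (m : ℝ) ^ 2 := by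
        gcongr
        exact (div_le_one hden).2 (mul_exp_neg_le_one_sub_exp_neg_pow _ ht.le hM)

theorem norm_lambertCuspCoeff_term_le (hζ : ‖ζ‖ = 1) (a : ℕ) (hM : M ≠ 0) (m : ℕ) :
    ‖if (ζ ^ M) ^ m = 1 then (ζ ^ a) ^ m / (M * m ^ 2 : ℂ) else 0‖ ≤ 1 / (m : ℝ) ^ 2 := by
  split_ifs
  · have hM1 : (1 : ℝ) ≤ M := Nat.one_le_cast.2 (Nat.one_le_iff_ne_zero.2 hM)
    rw [norm_div, norm_mul, norm_pow, norm_pow, norm_pow, hζ, one_pow, one_pow, norm_natCast,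
      norm_natCast, ← div_div]
    gcongr
    exact div_le_one_of_le₀ hM1 (Nat.cast_nonneg M)
  · rw [norm_zero]
    positivity

theorem re_div_norm_le_one (s : ℂ) : s.re / ‖s‖ ≤ 1 :=
  div_le_one_of_le₀ (re_le_norm s) (norm_nonneg s)

theorem norm_re_mul_sub_div_le {x c s : ℂ} (hs : 0 < s.re) :
    ‖s.re * (x - c / s)‖ ≤ s.re * ‖x‖ + ‖c‖ := by
  calc ‖s.re * (x - c / s)‖ ≤ s.re * (‖x‖ + ‖c / s‖) := by
        rw [norm_mul, Complex.norm_of_nonneg hs.le]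
        gcongr
        exact norm_sub_le _ _
    _ = s.re * ‖x‖ + s.re / ‖s‖ * ‖c‖ := by
        rw [norm_div]
        ring
    _ ≤ s.re * ‖x‖ + ‖c‖ := by
        gcongr
        exact mul_le_of_le_one_left (norm_nonneg c) (re_div_norm_le_one s)

theorem norm_re_mul_sub_div_le_norm_mul_sub {x c s : ℂ} (hs : 0 < s.re) :
    ‖s.re * (x - c / s)‖ ≤ ‖s * x - c‖ := by
  have hs0 : s ≠ 0 := Complex.ne_zero_of_re_pos hs
  have hmul : s.re * (x - c / s) = s.re / s * (s * x - c) := by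
    field_simp
  rw [hmul, norm_mul, norm_div, Complex.norm_of_nonneg hs.le]
  exact mul_le_of_le_one_left (norm_nonneg _) (re_div_norm_le_one s)

theorem tendsto_re_mul_lambert_sub (hζ : ‖ζ‖ = 1) (ha : a ≠ 0) (hM : M ≠ 0) :
    Tendsto (fun s : ℂ => s.re * (qPochhammerLambert ((ζ * cexp (-s)) ^ a) ((ζ * cexp (-s)) ^ M) -
      lambertCuspCoeff a M ζ / s)) (𝓝[{s | 0 < s.re}] 0) (𝓝 0) := by
  have hsum : Summable fun m : ℕ => 1 / (m : ℝ) ^ 2 := Real.summable_one_div_nat_pow.2 one_lt_two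
  have hcoeff := Summable.of_norm_bounded hsum (norm_lambertCuspCoeff_term_le hζ a hM)
  set C : ℕ → ℂ := fun m => if (ζ ^ M) ^ m = 1 then (ζ ^ a) ^ m / (M * m ^ 2) else 0 with hC
  set T : ℂ → ℕ → ℂ := fun s m =>
    ((ζ * cexp (-s)) ^ a) ^ m / (m * (1 - ((ζ * cexp (-s)) ^ M) ^ m)) with hT
  have hne : (𝓝[{s : ℂ | 0 < s.re}] 0) ≤ 𝓝[≠] 0 :=
    nhdsWithin_mono _ fun _ hs => Complex.ne_zero_of_re_pos hs
  have hlim := tendsto_tsum_of_dominated_convergence (𝓕 := 𝓝[{s : ℂ | 0 < s.re}] 0)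
    (f := fun s m => s.re * (T s m - C m / s)) (g := fun _ => (0 : ℂ)) (hsum.mul_left 2) ?_ ?_
  · rw [tsum_zero] at hlim
    refine hlim.congr' ?_
    filter_upwards [self_mem_nhdsWithin] with s hs
    have hs : 0 < s.re := hs
    have hsumT : Summable (T s) := Summable.of_norm_bounded (hsum.div_const s.re) fun m =>
      (le_div_iff₀' hs).2 (re_mul_norm_lambert_term_le hζ ha hM hs m)
    rw [tsum_mul_left, hsumT.tsum_sub (hcoeff.div_const s), tsum_div_const]
    rfl
  · intro m
    rcases eq_or_ne m 0 with rfl | hm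
    · have hzero (s : ℂ) : s.re * (T s 0 - C 0 / s) = 0 := by simp [hT, hC]
      simp only [hzero, tendsto_const_nhds]
    have h := ((tendsto_mul_lambert_term (ζ := ζ) (a := a) hM hm).mono_left hne).sub_const (C m)
    rw [sub_self] at h
    refine squeeze_zero_norm' ?_ (tendsto_zero_iff_norm_tendsto_zero.1 h)
    filter_upwards [self_mem_nhdsWithin] with s hs
    exact norm_re_mul_sub_div_le_norm_mul_sub hs
  · filter_upwards [self_mem_nhdsWithin] with s hs m
    have hs : 0 < s.re := hs
    calc ‖s.re * (T s m - C m / s)‖ ≤ s.re * ‖T s m‖ + ‖C m‖ := norm_re_mul_sub_div_le hs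
      _ ≤ 1 / (m : ℝ) ^ 2 + 1 / (m : ℝ) ^ 2 :=
          add_le_add (re_mul_norm_lambert_term_le hζ ha hM hs m)
            (norm_lambertCuspCoeff_term_le hζ a hM m)
      _ = 2 * (1 / (m : ℝ) ^ 2) := (two_mul _).symm

end RadialBehaviour

section CuspCoefficients

variable {a M : ℕ} {ζ : ℂ}

theorem lambertCuspCoeff_eq_div_orderOf_sq (a : ℕ) (ζ : ℂ) :
    lambertCuspCoeff a M ζ =
      lambertCuspCoeff a M (ζ ^ orderOf (ζ ^ M)) / (orderOf (ζ ^ M) : ℂ) ^ 2 := by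
  set k := orderOf (ζ ^ M)
  set F : ℕ → ℂ := fun m => if (ζ ^ M) ^ m = 1 then (ζ ^ a) ^ m / (M * m ^ 2) else 0 with hF
  have hF0 : F 0 = 0 := by simp [hF]
  have hzero : ∀ m, ¬k ∣ m → F m = 0 := fun m hm => if_neg (mt orderOf_dvd_of_pow_eq_one hm)
  have hmul (l : ℕ) : F (k * l) = (if ((ζ ^ k) ^ M) ^ l = 1 then
      ((ζ ^ k) ^ a) ^ l / (M * l ^ 2) else 0) / (k : ℂ) ^ 2 := by
    have h1 : (ζ ^ M) ^ k = 1 := pow_orderOf_eq_one _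
    simp only [hF, pow_mul, pow_right_comm ζ k, h1, one_pow, if_true, Nat.cast_mul, mul_pow,
      div_div]
    ring
  rw [lambertCuspCoeff, lambertCuspCoeff, ← tsum_div_const, ← tsum_congr hmul]
  rcases eq_or_ne k 0 with h0 | h0
  · have hF_eq_zero (m : ℕ) : F m = 0 := by
      rcases eq_or_ne m 0 with rfl | hm
      · exact hF0
      · exact hzero m (by rwa [h0, zero_dvd_iff])
    simp only [hF_eq_zero]
    exact (tsum_congr hF_eq_zero)
  · refine ((mul_right_injective₀ h0).tsum_eq fun m hm => ?_).symm
    obtain ⟨l, rfl⟩ := not_imp_comm.1 (hzero m) hm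
    exact ⟨l, rfl⟩

theorem hasSum_cos_two_pi_mul_div_sq (x : ℝ) :
    HasSum (fun n : ℕ => 1 / (n : ℝ) ^ 2 * Real.cos (2 * Real.pi * n * x))
      (Real.pi ^ 2 * bernoulliFun 2 (Int.fract x)) := by
  have h := hasSum_one_div_nat_pow_mul_cos one_ne_zero
    (x := Int.fract x) ⟨Int.fract_nonneg x, (Int.fract_lt_one x).le⟩
  have hval : (-1 : ℝ) ^ (1 + 1) * (2 * Real.pi) ^ (2 * 1) / 2 / (2 * 1).factorial =
      Real.pi ^ 2 := by
    rw [mul_one, Nat.factorial_two, Nat.cast_ofNat]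
    ring
  rw [hval] at h
  refine h.congr_fun fun n => ?_
  have harg : 2 * Real.pi * n * Int.fract x =
      2 * Real.pi * n * x - (n * ⌊x⌋ : ℤ) * (2 * Real.pi) := by
    rw [Int.fract]
    push_cast
    ring
  rw [mul_one, harg, Real.cos_sub_int_mul_two_pi]

theorem lambertCuspCoeff_add (hM : M ≠ 0) (ha : a ≤ M) (j : ℕ) :
    lambertCuspCoeff a M (cexp (2 * Real.pi * I / M) ^ j) +
        lambertCuspCoeff (M - a) M (cexp (2 * Real.pi * I / M) ^ j) =
      (2 * Real.pi ^ 2 / M * bernoulliFun 2 (Int.fract (a * j / M : ℝ)) : ℝ) := by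
  have : (M : ℂ) ≠ 0 := Nat.cast_ne_zero.2 hM
  set ζ := cexp (2 * Real.pi * I / M) ^ j with hζ
  have hζM : ζ ^ M = 1 := by
    rw [hζ, pow_right_comm, (Complex.isPrimitiveRoot_exp M hM).pow_eq_one, one_pow]
  have hζ1 : ‖ζ‖ = 1 := Complex.norm_eq_one_of_pow_eq_one hζM hM
  have hsummable (b : ℕ) := Summable.of_norm_bounded (Real.summable_one_div_nat_pow.2 one_lt_two)
    (norm_lambertCuspCoeff_term_le hζ1 b hM)
  rw [lambertCuspCoeff, lambertCuspCoeff, ← (hsummable a).tsum_add (hsummable (M - a))]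
  have hcos := (hasSum_cos_two_pi_mul_div_sq (a * j / M)).mul_left (2 / M : ℝ)
  rw [← mul_assoc, div_mul_eq_mul_div] at hcos
  refine ((Complex.hasSum_ofReal.2 hcos).congr_fun fun m => ?_).tsum_eq
  have hpow : (ζ ^ a) ^ m = cexp (2 * Real.pi * m * (a * j / M) * I) := by
    rw [hζ, ← exp_nat_mul, ← exp_nat_mul, ← exp_nat_mul]
    congr 1
    ring
  have hpow_sub : (ζ ^ (M - a)) ^ m = cexp (-(2 * Real.pi * m * (a * j / M)) * I) := by
    rw [pow_sub₀ _ (exp_ne_zero _ |> pow_ne_zero _) ha, hζM, one_mul, inv_pow, hpow, neg_mul,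
      exp_neg]
  simp only [hζM, one_pow, if_true, hpow, hpow_sub, ← add_div, ← two_cos]
  push_cast
  ring

/-- The Lambert series of `log (tangProduct q)`. -/
noncomputable def tangLambert (q : ℂ) : ℂ :=
  qPochhammerLambert (q ^ 2) (q ^ 10) + qPochhammerLambert (q ^ 8) (q ^ 10) +
    2 * (qPochhammerLambert (q ^ 3) (q ^ 10) + qPochhammerLambert (q ^ 7) (q ^ 10)) -
    2 * (qPochhammerLambert (q ^ 4) (q ^ 10) + qPochhammerLambert (q ^ 6) (q ^ 10))

/-- The coefficient of `1 / s` in `tangLambert (ζ * exp (-s))` as `s → 0`. -/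
noncomputable def tangCuspCoeff (ζ : ℂ) : ℂ :=
  lambertCuspCoeff 2 10 ζ + lambertCuspCoeff 8 10 ζ +
    2 * (lambertCuspCoeff 3 10 ζ + lambertCuspCoeff 7 10 ζ) -
    2 * (lambertCuspCoeff 4 10 ζ + lambertCuspCoeff 6 10 ζ)

theorem tangProduct_eq_exp_tangLambert {q : ℂ} (hq : ‖q‖ < 1) :
    tangProduct q = cexp (tangLambert q) := by
  have hexp : ∀ a ≠ 0, qPochhammerInf (q ^ a) (q ^ 10) =
      cexp (-qPochhammerLambert (q ^ a) (q ^ 10)) := fun a ha =>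
    qPochhammerInf_eq_exp_neg_lambert (norm_pow_lt_one hq ha) (norm_pow_lt_one hq (by norm_num))
  rw [tangProduct_eq hq, hexp 2 (by norm_num), hexp 3 (by norm_num), hexp 4 (by norm_num),
    hexp 6 (by norm_num), hexp 7 (by norm_num), hexp 8 (by norm_num)]
  simp only [← exp_add, ← exp_nat_mul, ← exp_sub, tangLambert]
  congr 1
  push_cast
  ring

theorem tendsto_re_mul_tangLambert_sub (hζ : ‖ζ‖ = 1) :
    Tendsto (fun s : ℂ => s.re * (tangLambert (ζ * cexp (-s)) - tangCuspCoeff ζ / s))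
      (𝓝[{s | 0 < s.re}] 0) (𝓝 0) := by
  have h (a : ℕ) (ha : a ≠ 0) := tendsto_re_mul_lambert_sub hζ ha (by norm_num : 10 ≠ 0)
  have hlim := (((h 2 (by norm_num)).add (h 8 (by norm_num))).add
    (((h 3 (by norm_num)).add (h 7 (by norm_num))).const_mul 2)).sub
    (((h 4 (by norm_num)).add (h 6 (by norm_num))).const_mul 2)
  simp only [add_zero, mul_zero, sub_zero] at hlim
  refine hlim.congr fun s => ?_
  rw [tangLambert, tangCuspCoeff]
  ring

theorem tangCuspCoeff_eq_div_orderOf_sq (ζ : ℂ) :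
    tangCuspCoeff ζ = tangCuspCoeff (ζ ^ orderOf (ζ ^ 10)) / (orderOf (ζ ^ 10) : ℂ) ^ 2 := by
  simp only [tangCuspCoeff, lambertCuspCoeff_eq_div_orderOf_sq (M := 10) _ ζ]
  ring

theorem tangCuspCoeff_exp_pow (j : ℕ) :
    tangCuspCoeff (cexp (2 * Real.pi * I / 10) ^ j) =
      (Real.pi ^ 2 / 5 * (bernoulliFun 2 (Int.fract (2 * j / 10 : ℝ)) +
        2 * bernoulliFun 2 (Int.fract (3 * j / 10 : ℝ)) -
        2 * bernoulliFun 2 (Int.fract (4 * j / 10 : ℝ))) : ℝ) := by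
  have h (a : ℕ) (ha : a ≤ 10) := lambertCuspCoeff_add (by norm_num : 10 ≠ 0) ha j
  have h2 := h 2 (by norm_num)
  have h3 := h 3 (by norm_num)
  have h4 := h 4 (by norm_num)
  norm_num only [Nat.cast_ofNat] at h2 h3 h4
  rw [tangCuspCoeff, h2, h3, h4]
  push_cast
  ring

theorem bernoulliFun_two_fract_le {j : ℕ} (hj : j < 10) :
    bernoulliFun 2 (Int.fract (2 * j / 10 : ℝ)) + 2 * bernoulliFun 2 (Int.fract (3 * j / 10 : ℝ)) -
        2 * bernoulliFun 2 (Int.fract (4 * j / 10 : ℝ)) ≤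
      if j ∈ ({0, 4, 6} : Finset ℕ) then 1 / 6 else 1 / 12 := by
  simp only [bernoulliFun_two]
  interval_cases j <;> norm_num

/-- The arguments of the three cusps at which `tangProduct` has maximal growth. -/
noncomputable def tangCusp : Fin 3 → ℝ := ![0, 4 * Real.pi / 5, -(4 * Real.pi / 5)]

theorem abs_tangCusp_lt_pi (i : Fin 3) : |tangCusp i| < Real.pi := by
  have hpi := Real.pi_pos
  rw [abs_lt]
  fin_cases i <;>
    simp only [tangCusp, Fin.zero_eta, Fin.mk_one, Fin.reduceFinMk, Matrix.cons_val] <;>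
    constructor <;> linarith

theorem exists_tangCusp_exp_eq {j : ℕ} (hj : j ∈ ({0, 4, 6} : Finset ℕ)) :
    ∃ i, cexp (2 * Real.pi * I / 10) ^ j = cexp (tangCusp i * I) := by
  rw [← exp_nat_mul]
  simp only [Finset.mem_insert, Finset.mem_singleton] at hj
  rcases hj with rfl | rfl | rfl
  · exact ⟨0, by simp [tangCusp]⟩
  · refine ⟨1, congrArg cexp ?_⟩
    simp only [tangCusp, Matrix.cons_val_one, Matrix.cons_val_zero]
    push_cast
    ring
  · refine ⟨2, Complex.exp_eq_exp_iff_exists_int.2 ⟨1, ?_⟩⟩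
    simp only [tangCusp, Matrix.cons_val]
    push_cast
    ring

theorem exists_tangCuspCoeff_of_pow_eq_one (hζ : ζ ^ 10 = 1) :
    ∃ c : ℝ, tangCuspCoeff ζ = c ∧ c ≤ Real.pi ^ 2 / 30 ∧
      (c ≤ Real.pi ^ 2 / 60 ∨ ∃ i, ζ = cexp (tangCusp i * I)) := by
  obtain ⟨j, hj, rfl⟩ := (Complex.isPrimitiveRoot_exp 10 (by norm_num)).eq_pow_of_pow_eq_one hζ
  refine ⟨_, tangCuspCoeff_exp_pow j, ?_⟩
  have hle := mul_le_mul_of_nonneg_left (bernoulliFun_two_fract_le hj)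
    (by positivity : 0 ≤ Real.pi ^ 2 / 5)
  split_ifs at hle with hmem
  · exact ⟨by linarith, Or.inr (exists_tangCusp_exp_eq hmem)⟩
  · exact ⟨by linarith [sq_nonneg Real.pi], Or.inl (by linarith)⟩

theorem exists_tangCuspCoeff (ζ : ℂ) :
    ∃ c : ℝ, tangCuspCoeff ζ = c ∧ c ≤ Real.pi ^ 2 / 30 ∧
      (c ≤ Real.pi ^ 2 / 60 ∨ ∃ i, ζ = cexp (tangCusp i * I)) := by
  by_cases hζ : ζ ^ 10 = 1
  · exact exists_tangCuspCoeff_of_pow_eq_one hζ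
  set k := orderOf (ζ ^ 10) with hk
  have hroot : (ζ ^ k) ^ 10 = 1 := by rw [pow_right_comm, pow_orderOf_eq_one]
  obtain ⟨c, hc, hle, -⟩ := exists_tangCuspCoeff_of_pow_eq_one hroot
  have hk1 : k ≠ 1 := fun h => hζ (orderOf_eq_one_iff.1 h)
  have hdiv : c / (k : ℝ) ^ 2 ≤ Real.pi ^ 2 / 60 := by
    rcases eq_or_ne k 0 with h0 | h0
    · rw [h0, Nat.cast_zero, zero_pow two_ne_zero, div_zero]
      positivity
    · have hk2 : (2 : ℝ) ≤ k := by exact_mod_cast (by lia : 2 ≤ k)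
      rw [div_le_iff₀ (by positivity)]
      calc c ≤ Real.pi ^ 2 / 60 * 2 ^ 2 := by linarith [sq_nonneg Real.pi]
        _ ≤ Real.pi ^ 2 / 60 * (k : ℝ) ^ 2 := by gcongr
  refine ⟨c / (k : ℝ) ^ 2, ?_, hdiv.trans ?_, Or.inl hdiv⟩
  · rw [tangCuspCoeff_eq_div_orderOf_sq, ← hk, hc]
    push_cast
    rfl
  · gcongr
    norm_num

end CuspCoefficients

section MinorArcs

variable {ζ : ℂ}

theorem eventually_norm_tangProduct_le (hζ : ‖ζ‖ = 1) {c : ℝ} (hc : tangCuspCoeff ζ = c) {ε : ℝ}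
    (hε : 0 < ε) :
    ∀ᶠ s in 𝓝[{s | 0 < s.re}] 0,
      ‖tangProduct (ζ * cexp (-s))‖ ≤ Real.exp ((c * (s.re * (s⁻¹).re) + ε) / s.re) := by
  filter_upwards [(Metric.tendsto_nhds.1 (tendsto_re_mul_tangLambert_sub hζ)) ε hε,
    self_mem_nhdsWithin] with s hs (hre : 0 < s.re)
  have hlt : ‖ζ * cexp (-s)‖ < 1 := by
    rw [norm_mul, hζ, one_mul]
    exact norm_exp_neg_lt_one hre
  rw [dist_zero_right, hc] at hs
  have hexp := (re_le_norm _).trans hs.le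
  rw [re_ofReal_mul, sub_re, div_eq_mul_inv, re_ofReal_mul, mul_sub, sub_le_iff_le_add'] at hexp
  rw [tangProduct_eq_exp_tangLambert hlt, Complex.norm_exp, Real.exp_le_exp, le_div_iff₀' hre]
  linarith

theorem re_mul_re_inv_le_half {s : ℂ} (h : |s.re| ≤ |s.im|) : s.re * (s⁻¹).re ≤ 1 / 2 := by
  have hsq := sq_le_sq.2 h
  rw [inv_re, mul_div_assoc']
  refine div_le_of_le_mul₀ (normSq_nonneg s) one_half_pos.le ?_
  rw [normSq_apply]
  linarith

theorem re_mul_re_inv_le_one (s : ℂ) : s.re * (s⁻¹).re ≤ 1 := by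
  rw [inv_re, mul_div_assoc']
  exact div_le_one_of_le₀ (re_sq_le_normSq s) (normSq_nonneg s)

theorem eventually_norm_tangProduct_le_of_minor (hζ : ‖ζ‖ = 1) :
    ∀ᶠ s in 𝓝[{s | 0 < s.re}] 0,
      ((∃ i, ζ = cexp (tangCusp i * I)) → s.re ≤ |s.im|) →
      ‖tangProduct (ζ * cexp (-s))‖ ≤ Real.exp (Real.pi ^ 2 / 40 / s.re) := by
  obtain ⟨c, hc, hle, hcusp⟩ := exists_tangCuspCoeff ζ
  filter_upwards [eventually_norm_tangProduct_le hζ hc (by positivity : 0 < Real.pi ^ 2 / 120),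
    self_mem_nhdsWithin] with s hs (hre : 0 < s.re) hmajor
  refine hs.trans (Real.exp_le_exp.2 (div_le_div_of_nonneg_right ?_ hre.le))
  have hnonneg : 0 ≤ s.re * (s⁻¹).re := by
    rw [inv_re]
    exact mul_nonneg hre.le (div_nonneg hre.le (normSq_nonneg s))
  suffices h : c * (s.re * (s⁻¹).re) ≤ Real.pi ^ 2 / 60 by linarith
  rcases hcusp with hcusp | hcusp
  · calc c * (s.re * (s⁻¹).re) ≤ Real.pi ^ 2 / 60 * (s.re * (s⁻¹).re) := by gcongr
      _ ≤ Real.pi ^ 2 / 60 := mul_le_of_le_one_right (by positivity) (re_mul_re_inv_le_one s)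
  · have hhalf := re_mul_re_inv_le_half ((abs_of_pos hre).trans_le (hmajor hcusp))
    calc c * (s.re * (s⁻¹).re) ≤ Real.pi ^ 2 / 30 * (1 / 2) := by gcongr
      _ = Real.pi ^ 2 / 60 := by ring

/-- By compactness of the circle, it is enough to bound `f` near each boundary point. -/
theorem eventually_forall_norm_le_exp_of_local {f : ℂ → ℂ} {B : ℝ} {ι : Type*} {t : ι → ℝ}
    (hf : ∀ t₀ ∈ Set.Icc (-Real.pi) Real.pi, ∀ᶠ s in 𝓝[{s : ℂ | 0 < s.re}] 0,
      (∀ j, t j = t₀ → s.re ≤ |s.im|) → ‖f (cexp (t₀ * I) * cexp (-s))‖ ≤ Real.exp (B / s.re)) :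
    ∀ᶠ σ : ℝ in 𝓝[>] 0, ∀ θ ∈ Set.Icc (-Real.pi) Real.pi, (∀ j, σ ≤ |θ - t j|) →
      ‖f (cexp (θ * I) * cexp (-σ))‖ ≤ Real.exp (B / σ) := by
  rw [eventually_nhdsWithin_iff]
  have hlocal := isCompact_Icc.eventually_forall_of_forall_eventually
    (K := Set.Icc (-Real.pi) Real.pi) (x₀ := (0 : ℝ))
    (P := fun σ θ => 0 < σ → (∀ j, σ ≤ |θ - t j|) →
      ‖f (cexp (θ * I) * cexp (-σ))‖ ≤ Real.exp (B / σ)) fun t₀ ht₀ => ?_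
  · filter_upwards [hlocal] with σ h hσ θ hθ using h θ hθ hσ
  have hs : Tendsto (fun p : ℝ × ℝ => (p.1 : ℂ) - ((p.2 - t₀ : ℝ) : ℂ) * I) (𝓝 (0, t₀)) (𝓝 0) := by
    have hcont : Continuous fun p : ℝ × ℝ => (p.1 : ℂ) - ((p.2 - t₀ : ℝ) : ℂ) * I := by fun_prop
    simpa using hcont.tendsto (0, t₀)
  filter_upwards [hs.eventually (eventually_nhdsWithin_iff.1 (hf t₀ ht₀))] with ⟨σ, θ⟩ h hσ hfar
  have hre : ((σ : ℂ) - ((θ - t₀ : ℝ) : ℂ) * I).re = σ := by simp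
  have him : ((σ : ℂ) - ((θ - t₀ : ℝ) : ℂ) * I).im = -(θ - t₀) := by simp
  have hexp : cexp (t₀ * I) * cexp (-((σ : ℂ) - ((θ - t₀ : ℝ) : ℂ) * I)) =
      cexp (θ * I) * cexp (-σ) := by
    rw [← exp_add, ← exp_add]
    congr 1
    push_cast
    ring
  simp only [hre, him, abs_neg, hexp] at h
  exact h hσ fun j hj => hj ▸ hfar j

theorem eq_of_exp_mul_I_eq {x y : ℝ} (h : cexp (x * I) = cexp (y * I))
    (hxy : |x - y| < 2 * Real.pi) : x = y := by
  obtain ⟨n, hn⟩ := Complex.exp_eq_exp_iff_exists_int.1 h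
  have hn' : x - y = n * (2 * Real.pi) := by
    have hI : ((x - y : ℝ) : ℂ) * I = ((n * (2 * Real.pi) : ℝ) : ℂ) * I := by
      push_cast
      linear_combination hn
    exact_mod_cast mul_right_cancel₀ I_ne_zero hI
  rw [hn', abs_mul, abs_of_pos Real.two_pi_pos, mul_lt_iff_lt_one_left Real.two_pi_pos] at hxy
  have hn0 : n = 0 := Int.abs_lt_one_iff.1 (by exact_mod_cast hxy)
  rwa [hn0, Int.cast_zero, zero_mul, sub_eq_zero] at hn'

theorem eventually_norm_tangProduct_le_minorArc :
    ∀ᶠ σ : ℝ in 𝓝[>] 0, ∀ θ ∈ Set.Icc (-Real.pi) Real.pi, (∀ j, σ ≤ |θ - tangCusp j|) →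
      ‖tangProduct (cexp (θ * I) * cexp (-σ))‖ ≤ Real.exp (Real.pi ^ 2 / 40 / σ) := by
  refine eventually_forall_norm_le_exp_of_local fun t₀ ht₀ => ?_
  filter_upwards [eventually_norm_tangProduct_le_of_minor (norm_exp_ofReal_mul_I t₀)] with s hs hfar
  refine hs fun ⟨j, hexp⟩ => hfar j (eq_of_exp_mul_I_eq hexp ?_).symm
  have hle : |t₀ - tangCusp j| ≤ Real.pi + |tangCusp j| :=
    (abs_sub _ _).trans (by gcongr; exact abs_le.2 ht₀)
  linarith [abs_tangCusp_lt_pi j]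

end MinorArcs

section CircleMethod

open MeasureTheory

variable {f : ℂ → ℂ} {g : ℕ → ℂ} {z : ℂ}

theorem norm_mul_exp_mul_I_mul_pow (a z : ℂ) (θ : ℝ) (k : ℕ) :
    ‖a * (cexp (θ * I) * z) ^ k‖ = ‖a * z ^ k‖ := by
  rw [mul_pow, norm_mul, norm_mul, norm_mul, norm_pow, norm_exp_ofReal_mul_I, one_pow, one_mul]

theorem continuous_circle_of_hasSum
    (hf : ∀ q : ℂ, ‖q‖ < 1 → HasSum (fun n => g n * q ^ n) (f q)) (hz : ‖z‖ < 1) :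
    Continuous fun θ : ℝ => f (cexp (θ * I) * z) := by
  have hf_eq : (fun θ : ℝ => f (cexp (θ * I) * z)) =
      fun θ : ℝ => ∑' k, g k * (cexp (θ * I) * z) ^ k := by
    funext θ
    exact (hf _ (by rwa [norm_mul, norm_exp_ofReal_mul_I, one_mul])).tsum_eq.symm
  rw [hf_eq]
  exact continuous_tsum (fun k => by fun_prop) (hf z hz).summable.norm fun k θ =>
    (norm_mul_exp_mul_I_mul_pow (g k) z θ k).le

theorem integral_exp_int_mul_I (m : ℤ) :
    ∫ θ in (-Real.pi)..Real.pi, cexp (m * θ * I) = if m = 0 then 2 * (Real.pi : ℂ) else 0 := by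
  split_ifs with hm
  · simp only [hm, Int.cast_zero, zero_mul, exp_zero, intervalIntegral.integral_const,
      sub_neg_eq_add, ← two_mul, real_smul, ofReal_mul, ofReal_ofNat, mul_one]
  · have hc : (m : ℂ) * I ≠ 0 := mul_ne_zero (Int.cast_ne_zero.2 hm) I_ne_zero
    have hexp : cexp (m * I * Real.pi) = cexp (m * I * (-Real.pi : ℝ)) :=
      exp_eq_exp_iff_exists_int.2 ⟨m, by push_cast; ring⟩
    simp_rw [mul_right_comm (m : ℂ) _ I]
    rw [integral_exp_mul_complex hc, hexp, sub_self, zero_div]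

theorem hasSum_integral_circle_mul_exp
    (hf : ∀ q : ℂ, ‖q‖ < 1 → HasSum (fun n => g n * q ^ n) (f q)) (hz : ‖z‖ < 1) (x : ℝ) :
    HasSum
      (fun k => ∫ θ in (-Real.pi)..Real.pi, g k * (cexp (θ * I) * z) ^ k * cexp ((x * θ : ℝ) * I))
      (∫ θ in (-Real.pi)..Real.pi, f (cexp (θ * I) * z) * cexp ((x * θ : ℝ) * I)) := by
  refine intervalIntegral.hasSum_integral_of_dominated_convergence (fun k _ => ‖g k * z ^ k‖)
    (fun k => Continuous.aestronglyMeasurable (by fun_prop))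
    (fun k => .of_forall fun θ _ => ?_) (.of_forall fun θ _ => (hf z hz).summable.norm)
    intervalIntegrable_const (.of_forall fun θ _ => (hf _ ?_).mul_right _)
  · rw [norm_mul, norm_mul_exp_mul_I_mul_pow, norm_exp_ofReal_mul_I, mul_one]
  · rwa [norm_mul, norm_exp_ofReal_mul_I, one_mul]

theorem integral_circle_mul_exp_eq_coeff
    (hf : ∀ q : ℂ, ‖q‖ < 1 → HasSum (fun n => g n * q ^ n) (f q)) (hz : ‖z‖ < 1) (n : ℕ) :
    ∫ θ in (-Real.pi)..Real.pi, f (cexp (θ * I) * z) * cexp ((-n * θ : ℝ) * I) =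
      2 * Real.pi * (g n * z ^ n) := by
  have hterm (k : ℕ) (θ : ℝ) : g k * (cexp (θ * I) * z) ^ k * cexp ((-n * θ : ℝ) * I) =
      g k * z ^ k * cexp (((k - n : ℤ) : ℂ) * θ * I) := by
    have hexp : cexp (((k - n : ℤ) : ℂ) * θ * I) = cexp (θ * I) ^ k * cexp ((-n * θ : ℝ) * I) := by
      rw [← exp_nat_mul, ← exp_add]
      congr 1
      push_cast
      ring
    rw [hexp, mul_pow]
    ring
  have hint (k : ℕ) : ∫ θ in (-Real.pi)..Real.pi,
      g k * (cexp (θ * I) * z) ^ k * cexp ((-n * θ : ℝ) * I) =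
        if k = n then 2 * Real.pi * (g n * z ^ n) else 0 := by
    simp_rw [hterm, intervalIntegral.integral_const_mul, integral_exp_int_mul_I, sub_eq_zero,
      Nat.cast_inj]
    split_ifs with hk
    · rw [hk, mul_comm]
    · rw [mul_zero]
  have hsum := hasSum_integral_circle_mul_exp hf hz (-n)
  simp only [hint] at hsum
  exact hsum.unique (hasSum_ite_eq n _)

theorem norm_integral_sub_sum_arcs_le {ι : Type*} [Fintype ι] {t : ι → ℝ} {F : ℝ → ℂ}
    {a b σ C : ℝ} (hF : Continuous F) (hC : 0 ≤ C) (hab : a ≤ b) (hσ : 0 ≤ σ)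
    (hsub : ∀ i, a ≤ t i - σ ∧ t i + σ ≤ b) (hsep : ∀ i j, i ≠ j → 2 * σ ≤ |t i - t j|)
    (hbound : ∀ θ ∈ Set.Icc a b, (∀ i, σ ≤ |θ - t i|) → ‖F θ‖ ≤ C) :
    ‖(∫ θ in a..b, F θ) - ∑ i, ∫ θ in (t i - σ)..(t i + σ), F θ‖ ≤ C * (b - a) := by
  set arc : ι → Set ℝ := fun i => Set.Ioc (t i - σ) (t i + σ)
  have hdisj : Pairwise (Function.onFun Disjoint arc) := by
    intro i j hij
    refine Set.disjoint_left.2 fun θ hi hj => ?_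
    have := hsep i j hij
    rcases le_abs.1 this with h | h <;> linarith [hi.1, hi.2, hj.1, hj.2]
  have hint (x y : ℝ) : IntegrableOn F (Set.Ioc x y) :=
    (hF.integrableOn_Icc).mono_set Set.Ioc_subset_Icc_self
  have hunion : ∑ i, ∫ θ in (t i - σ)..(t i + σ), F θ = ∫ θ in ⋃ i, arc i, F θ := by
    rw [integral_iUnion_fintype (fun i => measurableSet_Ioc) hdisj fun i => hint _ _]
    exact Finset.sum_congr rfl fun i _ => intervalIntegral.integral_of_le (by linarith)
  have harcs : ⋃ i, arc i ⊆ Set.Ioc a b :=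
    Set.iUnion_subset fun i => Set.Ioc_subset_Ioc (hsub i).1 (hsub i).2
  rw [hunion, intervalIntegral.integral_of_le hab,
    ← setIntegral_sdiff (.iUnion fun i => measurableSet_Ioc) (hint a b) harcs]
  have hvol : volume.real (Set.Ioc a b \ ⋃ i, arc i) ≤ b - a := by
    rw [← Real.volume_real_Ioc_of_le hab]
    exact measureReal_mono Set.sdiff_subset measure_Ioc_lt_top.ne
  refine (norm_setIntegral_le_of_norm_le_const
    ((measure_mono Set.sdiff_subset).trans_lt measure_Ioc_lt_top) fun θ hθ => ?_).trans
    (mul_le_mul_of_nonneg_left hvol hC)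
  refine hbound θ (Set.Ioc_subset_Icc_self hθ.1) fun i => ?_
  by_contra! hlt
  rw [abs_lt] at hlt
  exact hθ.2 (Set.mem_iUnion.2 ⟨i, by linarith [hlt.1], by linarith [hlt.2]⟩)

theorem tendsto_mul_one_sub_mul_I_horocyclicNhds :
    Tendsto (fun p : ℝ × ℝ => (p.1 : ℂ) * (1 - p.2 * I)) (𝓝[>] 0 ×ˢ 𝓟 (Set.Icc (-1) 1))
      horocyclicNhds := by
  refine tendsto_comap_iff.2 (tendsto_atTop_mono' _ ?_
    ((tendsto_inv_nhdsGT_zero.comp tendsto_fst).const_mul_atTop one_half_pos))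
  have hdom : ∀ᶠ p : ℝ × ℝ in 𝓝[>] 0 ×ˢ 𝓟 (Set.Icc (-1) 1),
      p.1 ∈ Set.Ioi 0 ∧ p.2 ∈ Set.Icc (-1) 1 :=
    prod_mem_prod self_mem_nhdsWithin (mem_principal_self _)
  filter_upwards [hdom] with ⟨σ, u⟩ ⟨hσ, hu⟩
  have hσ : 0 < σ := hσ
  have hu : u ^ 2 ≤ 1 := (sq_le_one_iff_abs_le_one u).2 (abs_le.2 hu)
  have hre : (((σ : ℂ) * (1 - u * I))⁻¹).re = σ⁻¹ * (1 + u ^ 2)⁻¹ := by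
    rw [mul_inv, ← ofReal_inv, re_ofReal_mul, inv_re, normSq_apply]
    simp [div_eq_mul_inv, sq]
  simp only [Function.comp_apply]
  rw [hre, mul_comm]
  gcongr
  rw [one_div]
  gcongr
  linarith

theorem norm_exp_neg_sq_div_le {u : ℝ} (hu : |u| ≤ 1) (v : ℝ) :
    ‖cexp (-((v : ℂ) ^ 2 / (1 - u * I)))‖ ≤ Real.exp (-(1 / 2) * v ^ 2) := by
  have hu : u ^ 2 ≤ 1 := (sq_le_one_iff_abs_le_one u).2 hu
  have hre : (-((v : ℂ) ^ 2 / (1 - u * I))).re = -(v ^ 2 * (1 + u ^ 2)⁻¹) := by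
    rw [← ofReal_pow, neg_re, div_eq_mul_inv, re_ofReal_mul, inv_re, normSq_apply]
    simp [div_eq_mul_inv, sq]
  rw [norm_exp, hre, Real.exp_le_exp, neg_mul, neg_le_neg_iff, mul_comm, one_div]
  gcongr
  linarith

/-- The factor `e^{-A/σ} / (σ √(σ/A))` which normalises the saddle-point integral over the circle
of radius `e^{-σ}` of a function growing like `e^{A/s}`: the first part removes the size of the
integrand, and `σ √(σ/A)` is the width of the peak. -/
noncomputable def saddleScale (A σ : ℝ) : ℝ := Real.exp (-(A / σ)) / (σ * √(σ / A))

variable {A σ t : ℝ} {c : ℂ}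

theorem one_sub_ofReal_mul_I_ne_zero (u : ℝ) : (1 : ℂ) - u * I ≠ 0 :=
  fun h => by simpa using congrArg re h

theorem exp_mul_I_mul_exp_neg_mul (t σ u : ℝ) :
    cexp (t * I) * cexp (-(σ * (1 - u * I))) = cexp ((t + σ * u : ℝ) * I) * cexp (-σ) := by
  rw [← exp_add, ← exp_add]
  congr 1
  push_cast
  ring

-- Completing the square: with `s = σ (1 - i u)` one has
-- `-A/σ - i (A/σ²) σ u = -A/s - (A/σ) u²/(1 - i u)`.
theorem exp_neg_mul_integrand_eq (f : ℂ → ℂ) (hA : 0 < A) (hσ : 0 < σ) (t v : ℝ) {u : ℝ}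
    (hu : u = √(σ / A) * v) :
    cexp (-(A / σ)) * (f (cexp ((t + σ * u : ℝ) * I) * cexp (-σ)) *
        cexp ((-(A / σ ^ 2) * (σ * u) : ℝ) * I)) =
      f (cexp (t * I) * cexp (-(σ * (1 - u * I)))) * cexp (-(A / (σ * (1 - u * I)))) *
        cexp (-((v : ℂ) ^ 2 / (1 - u * I))) := by
  have hden := one_sub_ofReal_mul_I_ne_zero u
  have hAc : (A : ℂ) ≠ 0 := ofReal_ne_zero.2 hA.ne'
  have hσc : (σ : ℂ) ≠ 0 := ofReal_ne_zero.2 hσ.ne'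
  have hv : (v : ℂ) ^ 2 = A / σ * u ^ 2 := by
    have : v ^ 2 = A / σ * u ^ 2 := by
      rw [hu, mul_pow, Real.sq_sqrt (by positivity)]
      field_simp
    exact_mod_cast this
  have hexp : -(A / σ : ℂ) + (-(A / σ ^ 2) * (σ * u) : ℝ) * I =
      -(A / (σ * (1 - u * I))) + -((v : ℂ) ^ 2 / (1 - u * I)) := by
    rw [hv]
    push_cast
    field_simp
    linear_combination (u : ℂ) ^ 2 * I_sq
  rw [exp_mul_I_mul_exp_neg_mul, mul_left_comm, mul_assoc (f _),
    ← exp_add (-(A / σ : ℂ)), hexp, exp_add]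

theorem integral_const_mul_exp_neg_sq (c : ℂ) :
    ∫ v : ℝ, c * cexp (-(v : ℂ) ^ 2) = c * √Real.pi := by
  have hgauss : ∫ v : ℝ, Real.exp (-v ^ 2) = √Real.pi := by
    simpa only [neg_mul, one_mul, div_one] using integral_gaussian 1
  rw [integral_const_mul, ← hgauss, ← integral_complex_ofReal]
  push_cast
  rfl

theorem saddleScale_mul_integral_eq (hA : 0 < A) (hσ : 0 < σ) (F : ℝ → ℂ) (t : ℝ) :
    saddleScale A σ * ∫ θ in (t - σ)..(t + σ), F θ =
      ∫ v, (Set.Ioc (-(√(σ / A))⁻¹) (√(σ / A))⁻¹).indicator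
        (fun v => cexp (-(A / σ)) * F (t + σ * (√(σ / A) * v))) v := by
  set r := √(σ / A) with hr
  have hr0 : 0 < r := Real.sqrt_pos.2 (by positivity)
  have hle : -r⁻¹ ≤ r⁻¹ := neg_le_self (by positivity)
  rw [integral_indicator measurableSet_Ioc, ← intervalIntegral.integral_of_le hle,
    intervalIntegral.integral_const_mul]
  simp_rw [← mul_assoc σ r]
  rw [intervalIntegral.integral_comp_add_mul F (mul_pos hσ hr0).ne' t, mul_neg,
    mul_inv_cancel_right₀ hr0.ne', ← sub_eq_add_neg, real_smul, saddleScale, ← hr, ← mul_assoc]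
  push_cast
  rw [div_eq_mul_inv]

theorem continuous_exp_neg_sq_div :
    Continuous fun p : ℝ × ℝ => cexp (-((p.1 : ℂ) ^ 2 / (1 - p.2 * I))) :=
  .cexp (.neg (.div (by fun_prop) (by fun_prop) fun p => one_sub_ofReal_mul_I_ne_zero p.2))

theorem tendsto_exp_neg_sq_div {α : Type*} {l : Filter α} {u : α → ℝ} (hu : Tendsto u l (𝓝 0))
    (v : ℝ) : Tendsto (fun x => cexp (-((v : ℂ) ^ 2 / (1 - u x * I)))) l
      (𝓝 (cexp (-(v : ℂ) ^ 2))) := by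
  have h := (continuous_exp_neg_sq_div.tendsto (v, 0)).comp (tendsto_const_nhds.prodMk_nhds hu)
  simpa only [Function.comp_def, ofReal_zero, zero_mul, sub_zero, div_one] using h

theorem tendsto_integral_indicator_mul_exp_neg_sq_div {G : ℂ → ℂ} (hA : 0 < A)
    (hcont : ∀ σ : ℝ, 0 < σ → Continuous fun u : ℝ => G (σ * (1 - u * I)))
    (hlim : Tendsto G horocyclicNhds (𝓝 c)) :
    Tendsto (fun σ : ℝ => ∫ v, (Set.Ioc (-(√(σ / A))⁻¹) (√(σ / A))⁻¹).indicator
        (fun v => G (σ * (1 - (√(σ / A) * v : ℝ) * I)) *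
          cexp (-((v : ℂ) ^ 2 / (1 - (√(σ / A) * v : ℝ) * I)))) v)
      (𝓝[>] 0) (𝓝 (c * √Real.pi)) := by
  set r : ℝ → ℝ := fun σ => √(σ / A) with hr
  have hσ_pos : ∀ᶠ σ : ℝ in 𝓝[>] 0, 0 < σ := self_mem_nhdsWithin
  have hr_pos {σ : ℝ} (hσ : 0 < σ) : 0 < r σ := Real.sqrt_pos.2 (by positivity)
  have hmem {σ v : ℝ} (hσ : 0 < σ) : v ∈ Set.Ioc (-(r σ)⁻¹) (r σ)⁻¹ ↔ r σ * v ∈ Set.Ioc (-1) 1 := by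
    rw [Set.mem_Ioc, Set.mem_Ioc, ← div_lt_iff₀' (hr_pos hσ), ← le_div_iff₀' (hr_pos hσ), neg_div,
      one_div]
  have hG := hlim.comp tendsto_mul_one_sub_mul_I_horocyclicNhds
  rw [← integral_const_mul_exp_neg_sq]
  refine tendsto_integral_filter_of_dominated_convergence
    (fun v => (‖c‖ + 1) * Real.exp (-(1 / 2) * v ^ 2)) ?_ ?_
    ((integrable_exp_neg_mul_sq one_half_pos).const_mul _) (.of_forall fun v => ?_)
  · filter_upwards [hσ_pos] with σ hσ
    exact (((hcont σ hσ).comp (continuous_const_mul (r σ))).mul (continuous_exp_neg_sq_div.comp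
      (continuous_id.prodMk (continuous_const_mul _)))).aestronglyMeasurable.indicator
        measurableSet_Ioc
  · have hbound : ∀ᶠ σ : ℝ in 𝓝[>] 0, ∀ u ∈ Set.Icc (-1 : ℝ) 1,
        ‖G (σ * (1 - u * I))‖ < ‖c‖ + 1 :=
      eventually_prod_principal_iff.1 (hG.norm.eventually_lt_const (lt_add_one _))
    filter_upwards [hσ_pos, hbound] with σ hσ hb
    refine .of_forall fun v => ?_
    rw [norm_indicator_eq_indicator_norm]
    refine Set.indicator_apply_le' (fun hv => ?_) fun _ => by positivity
    have hu := Set.Ioc_subset_Icc_self ((hmem hσ).1 hv)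
    rw [norm_mul]
    exact mul_le_mul (hb _ hu).le (norm_exp_neg_sq_div_le (abs_le.2 hu) v) (norm_nonneg _)
      (by positivity)
  · have hr_lim : Tendsto (fun σ => r σ * v) (𝓝[>] 0) (𝓝 0) := by
      have h : Continuous fun σ => r σ * v := by fun_prop
      simpa [hr] using (h.tendsto 0).mono_left nhdsWithin_le_nhds
    have hsmall : ∀ᶠ σ in 𝓝[>] 0, r σ * v ∈ Set.Ioo (-1) 1 :=
      hr_lim.eventually (Ioo_mem_nhds (by norm_num) one_pos)
    have hpair : Tendsto (fun σ => (σ, r σ * v)) (𝓝[>] 0) (𝓝[>] 0 ×ˢ 𝓟 (Set.Icc (-1) 1)) :=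
      tendsto_id.prodMk (tendsto_principal.2 (hsmall.mono fun σ h => Set.Ioo_subset_Icc_self h))
    refine ((hG.comp hpair).mul (tendsto_exp_neg_sq_div hr_lim v)).congr' ?_
    filter_upwards [hσ_pos, hsmall] with σ hσ hv
    rw [Set.indicator_of_mem ((hmem hσ).2 (Set.Ioo_subset_Ioc_self hv))]
    rfl

theorem tendsto_saddleScale_mul_integral_arc (hA : 0 < A)
    (hf : ∀ z : ℂ, ‖z‖ < 1 → Continuous fun θ : ℝ => f (cexp (θ * I) * z))
    (hlim : Tendsto (fun s => f (cexp (t * I) * cexp (-s)) * cexp (-(A / s)))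
      horocyclicNhds (𝓝 c)) :
    Tendsto (fun σ : ℝ => saddleScale A σ * ∫ θ in (t - σ)..(t + σ),
        f (cexp (θ * I) * cexp (-σ)) * cexp ((-(A / σ ^ 2) * (θ - t) : ℝ) * I))
      (𝓝[>] 0) (𝓝 (c * √Real.pi)) := by
  refine (tendsto_integral_indicator_mul_exp_neg_sq_div hA (fun σ hσ => ?_) hlim).congr' ?_
  · have hden (u : ℝ) : (σ : ℂ) * (1 - u * I) ≠ 0 :=
      mul_ne_zero (ofReal_ne_zero.2 hσ.ne') (one_sub_ofReal_mul_I_ne_zero u)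
    have hcont := (hf (cexp (-σ)) (norm_exp_neg_lt_one (by simpa only [ofReal_re] using hσ))).comp
      (by fun_prop : Continuous fun u : ℝ => t + σ * u)
    simp only [exp_mul_I_mul_exp_neg_mul]
    exact hcont.mul (.cexp (.neg (.div (by fun_prop) (by fun_prop) hden)))
  · filter_upwards [self_mem_nhdsWithin] with σ hσ
    rw [saddleScale_mul_integral_eq hA hσ]
    simp only [add_sub_cancel_left, exp_neg_mul_integrand_eq f hA hσ t _ rfl]

theorem tendsto_saddleScale_mul_integral_arc_sub (hA : 0 < A)
    (hf : ∀ z : ℂ, ‖z‖ < 1 → Continuous fun θ : ℝ => f (cexp (θ * I) * z))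
    (hlim : Tendsto (fun s => f (cexp (t * I) * cexp (-s)) * cexp (-(A / s)))
      horocyclicNhds (𝓝 c)) :
    Tendsto (fun σ : ℝ => saddleScale A σ * (∫ θ in (t - σ)..(t + σ),
        f (cexp (θ * I) * cexp (-σ)) * cexp ((-(A / σ ^ 2) * θ : ℝ) * I)) -
        √Real.pi * (c * cexp ((-(A / σ ^ 2) * t : ℝ) * I)))
      (𝓝[>] 0) (𝓝 0) := by
  have h := (tendsto_saddleScale_mul_integral_arc hA hf hlim).sub_const (c * √Real.pi)
  rw [sub_self, tendsto_zero_iff_norm_tendsto_zero] at h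
  refine tendsto_zero_iff_norm_tendsto_zero.2 (h.congr fun σ => ?_)
  have htwist (θ : ℝ) :
      f (cexp (θ * I) * cexp (-σ)) * cexp ((-(A / σ ^ 2) * θ : ℝ) * I) =
        cexp ((-(A / σ ^ 2) * t : ℝ) * I) *
          (f (cexp (θ * I) * cexp (-σ)) * cexp ((-(A / σ ^ 2) * (θ - t) : ℝ) * I)) := by
    rw [mul_left_comm, ← exp_add (((-(A / σ ^ 2) * t : ℝ) : ℂ) * I)]
    congr 2
    push_cast
    ring
  simp only [htwist, intervalIntegral.integral_const_mul]
  rw [← one_mul ‖_‖, ← norm_exp_ofReal_mul_I (-(A / σ ^ 2) * t), ← norm_mul]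
  congr 1
  ring

theorem tendsto_saddleScale_mul_exp {B : ℝ} (hA : 0 < A) (hB : B < A) :
    Tendsto (fun σ => saddleScale A σ * Real.exp (B / σ)) (𝓝[>] 0) (𝓝 0) := by
  have h := ((tendsto_rpow_mul_exp_neg_mul_atTop_nhds_zero (3 / 2) (A - B) (sub_pos.2 hB)).comp
    tendsto_inv_nhdsGT_zero).const_mul √A
  rw [mul_zero] at h
  refine h.congr' ?_
  filter_upwards [self_mem_nhdsWithin] with σ (hσ : 0 < σ)
  have hexp : Real.exp (-(A - B) * σ⁻¹) = Real.exp (-(A / σ)) * Real.exp (B / σ) := by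
    rw [← Real.exp_add]
    congr 1
    ring
  have hpow : σ⁻¹ ^ (3 / 2 : ℝ) = (σ * √σ)⁻¹ := by
    rw [Real.inv_rpow hσ.le, Real.sqrt_eq_rpow, ← Real.rpow_one_add' hσ.le (by norm_num)]
    norm_num
  simp only [Function.comp_apply, saddleScale]
  rw [hexp, hpow, Real.sqrt_div hσ.le]
  have : 0 < √σ := Real.sqrt_pos.2 hσ
  field_simp

variable {ι : Type*} {τ : ι → ℝ} {d : ι → ℂ} {B : ℝ}

theorem eventually_arcs_subset [Finite ι] (hτ : ∀ i, |τ i| < Real.pi) :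
    ∀ᶠ σ : ℝ in 𝓝[>] 0, ∀ i, -Real.pi ≤ τ i - σ ∧ τ i + σ ≤ Real.pi := by
  refine eventually_all.2 fun i => ?_
  filter_upwards [(eventually_le_nhds (sub_pos.2 (hτ i))).filter_mono nhdsWithin_le_nhds] with σ hσ
  constructor <;> linarith [neg_abs_le (τ i), le_abs_self (τ i)]

theorem eventually_arcs_separated [Finite ι] (hinj : Function.Injective τ) :
    ∀ᶠ σ : ℝ in 𝓝[>] 0, ∀ i j, i ≠ j → 2 * σ ≤ |τ i - τ j| := by
  refine eventually_all.2 fun i => eventually_all.2 fun j =>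
    eventually_imp_distrib_left.2 fun hij => ?_
  have hpos : 0 < |τ i - τ j| / 2 := half_pos (abs_pos.2 (sub_ne_zero.2 (hinj.ne hij)))
  filter_upwards [(eventually_le_nhds hpos).filter_mono nhdsWithin_le_nhds] with σ hσ
  linarith

variable [Fintype ι]

theorem tendsto_saddleScale_mul_integral_minorArcs (hA : 0 < A) (hB : B < A)
    (hinj : Function.Injective τ) (hτ : ∀ i, |τ i| < Real.pi)
    (hf : ∀ z : ℂ, ‖z‖ < 1 → Continuous fun θ : ℝ => f (cexp (θ * I) * z))
    (hminor : ∀ᶠ σ : ℝ in 𝓝[>] 0, ∀ θ ∈ Set.Icc (-Real.pi) Real.pi, (∀ i, σ ≤ |θ - τ i|) →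
      ‖f (cexp (θ * I) * cexp (-σ))‖ ≤ Real.exp (B / σ)) :
    Tendsto (fun σ : ℝ => saddleScale A σ *
      ((∫ θ in (-Real.pi)..Real.pi,
          f (cexp (θ * I) * cexp (-σ)) * cexp ((-(A / σ ^ 2) * θ : ℝ) * I)) -
        ∑ i, ∫ θ in (τ i - σ)..(τ i + σ),
          f (cexp (θ * I) * cexp (-σ)) * cexp ((-(A / σ ^ 2) * θ : ℝ) * I)))
      (𝓝[>] 0) (𝓝 0) := by
  have hzero := (tendsto_saddleScale_mul_exp hA hB).mul_const (Real.pi - -Real.pi)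
  rw [zero_mul] at hzero
  refine squeeze_zero_norm' ?_ hzero
  filter_upwards [eventually_arcs_subset hτ, eventually_arcs_separated hinj, hminor,
    self_mem_nhdsWithin] with σ hsub hsep hminor (hσ : 0 < σ)
  have hscale : 0 ≤ saddleScale A σ := by
    unfold saddleScale
    positivity
  have hcont := (hf (cexp (-σ)) (norm_exp_neg_lt_one (by simpa only [ofReal_re] using hσ))).mul
    (by fun_prop : Continuous fun θ : ℝ => cexp ((-(A / σ ^ 2) * θ : ℝ) * I))
  rw [norm_mul, Complex.norm_of_nonneg hscale, mul_assoc]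
  refine mul_le_mul_of_nonneg_left (norm_integral_sub_sum_arcs_le hcont (Real.exp_nonneg _)
    (by linarith [Real.pi_pos]) hσ.le hsub hsep fun θ hθ hfar => ?_) hscale
  rw [norm_mul, norm_exp_ofReal_mul_I, mul_one]
  exact hminor θ hθ hfar

theorem tendsto_saddleScale_mul_integral_circle_sub (hA : 0 < A) (hB : B < A)
    (hinj : Function.Injective τ) (hτ : ∀ i, |τ i| < Real.pi)
    (hf : ∀ z : ℂ, ‖z‖ < 1 → Continuous fun θ : ℝ => f (cexp (θ * I) * z))
    (hmajor : ∀ i, Tendsto (fun s => f (cexp (τ i * I) * cexp (-s)) * cexp (-(A / s)))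
      horocyclicNhds (𝓝 (d i)))
    (hminor : ∀ᶠ σ : ℝ in 𝓝[>] 0, ∀ θ ∈ Set.Icc (-Real.pi) Real.pi, (∀ i, σ ≤ |θ - τ i|) →
      ‖f (cexp (θ * I) * cexp (-σ))‖ ≤ Real.exp (B / σ)) :
    Tendsto (fun σ : ℝ => saddleScale A σ * (∫ θ in (-Real.pi)..Real.pi,
        f (cexp (θ * I) * cexp (-σ)) * cexp ((-(A / σ ^ 2) * θ : ℝ) * I)) -
        √Real.pi * ∑ i, d i * cexp ((-(A / σ ^ 2) * τ i : ℝ) * I))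
      (𝓝[>] 0) (𝓝 0) := by
  have harcs := tendsto_finsetSum Finset.univ fun i _ =>
    tendsto_saddleScale_mul_integral_arc_sub hA hf (hmajor i)
  have hrest := tendsto_saddleScale_mul_integral_minorArcs hA hB hinj hτ hf hminor
  have hsum := hrest.add harcs
  rw [Finset.sum_const_zero, add_zero] at hsum
  refine hsum.congr fun σ => ?_
  rw [Finset.sum_sub_distrib, ← Finset.mul_sum, ← Finset.mul_sum]
  ring

/-- The size `A^{1/4} x^{-3/4} e^{2 √(A x)} / (2 √π)` of the `x`-th coefficient of a power series
which grows like `e^{A/s}` at `q = e^{-s}`. -/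
noncomputable def saddleGrowth (A x : ℝ) : ℝ :=
  A ^ ((1 : ℝ) / 4) * x ^ (-(3 : ℝ) / 4) * Real.exp (2 * √(A * x)) / (2 * √Real.pi)

theorem saddleScale_sqrt_div_mul_exp {x : ℝ} (hA : 0 < A) (hx : 0 < x) :
    saddleScale A √(A / x) * Real.exp (-(x * √(A / x))) =
      (2 * √Real.pi * saddleGrowth A x)⁻¹ := by
  have hroot {y : ℝ} (hy : 0 < y) : ∃ z, 0 < z ∧ z ^ 4 = y :=
    ⟨y ^ ((4 : ℕ) : ℝ)⁻¹, by positivity, Real.rpow_inv_natCast_pow hy.le four_ne_zero⟩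
  obtain ⟨a, ha, rfl⟩ := hroot hA
  obtain ⟨y, hy, rfl⟩ := hroot hx
  have hσ : √(a ^ 4 / y ^ 4) = a ^ 2 / y ^ 2 := by
    rw [← Real.sqrt_sq (by positivity : 0 ≤ a ^ 2 / y ^ 2)]
    congr 1
    ring
  have hwidth : √(a ^ 2 / y ^ 2 / a ^ 4) = (a * y)⁻¹ := by
    rw [← Real.sqrt_sq (by positivity : 0 ≤ (a * y)⁻¹)]
    congr 1
    field_simp
  have hprod : √(a ^ 4 * y ^ 4) = a ^ 2 * y ^ 2 := by
    rw [← Real.sqrt_sq (by positivity : 0 ≤ a ^ 2 * y ^ 2)]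
    congr 1
    ring
  have ha_pow : (a ^ 4) ^ ((1 : ℝ) / 4) = a := by
    rw [← Real.rpow_natCast_mul ha.le, Nat.cast_ofNat, mul_one_div_cancel four_ne_zero,
      Real.rpow_one]
  have hy_pow : (y ^ 4) ^ (-(3 : ℝ) / 4) = (y ^ 3)⁻¹ := by
    rw [← Real.rpow_natCast_mul hy.le, ← Real.rpow_natCast, ← Real.rpow_neg hy.le]
    norm_num
  have hexp : Real.exp (-(a ^ 4 / (a ^ 2 / y ^ 2))) * Real.exp (-(y ^ 4 * (a ^ 2 / y ^ 2))) =
      (Real.exp (2 * (a ^ 2 * y ^ 2)))⁻¹ := by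
    rw [← Real.exp_add, ← Real.exp_neg]
    congr 1
    field_simp
    ring
  have : 0 < √Real.pi := Real.sqrt_pos.2 Real.pi_pos
  rw [saddleScale, saddleGrowth, hσ, hwidth, hprod, ha_pow, hy_pow, div_mul_eq_mul_div, hexp]
  field_simp

-- On the circle of radius `e^{-√(A/n)}` the saddle-point weight `A/σ²` equals `n`.
theorem tendsto_coeff_div_saddleGrowth_sub (hA : 0 < A) (hB : B < A)
    (hinj : Function.Injective τ) (hτ : ∀ i, |τ i| < Real.pi)
    (hf : ∀ q : ℂ, ‖q‖ < 1 → HasSum (fun n => g n * q ^ n) (f q))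
    (hmajor : ∀ i, Tendsto (fun s => f (cexp (τ i * I) * cexp (-s)) * cexp (-(A / s)))
      horocyclicNhds (𝓝 (d i)))
    (hminor : ∀ᶠ σ : ℝ in 𝓝[>] 0, ∀ θ ∈ Set.Icc (-Real.pi) Real.pi, (∀ i, σ ≤ |θ - τ i|) →
      ‖f (cexp (θ * I) * cexp (-σ))‖ ≤ Real.exp (B / σ)) :
    Tendsto (fun n : ℕ => g n / saddleGrowth A n - ∑ i, d i * cexp ((-n * τ i : ℝ) * I))
      atTop (𝓝 0) := by
  have hσ_lim : Tendsto (fun n : ℕ => √(A / n)) atTop (𝓝[>] 0) := by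
    refine tendsto_nhdsWithin_iff.2 ⟨?_, ?_⟩
    · simpa using (tendsto_const_div_atTop_nhds_zero_nat A).sqrt
    · filter_upwards [eventually_gt_atTop 0] with n hn
      exact Real.sqrt_pos.2 (by positivity)
  have hcircle := (tendsto_saddleScale_mul_integral_circle_sub hA hB hinj hτ
    (fun z hz => continuous_circle_of_hasSum hf hz) hmajor hminor).comp hσ_lim
  have h := hcircle.const_mul ((√Real.pi : ℂ)⁻¹)
  rw [mul_zero] at h
  refine h.congr' ?_
  filter_upwards [eventually_gt_atTop 0] with n hn
  have hn' : (0 : ℝ) < n := Nat.cast_pos.2 hn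
  set σ := √(A / n) with hσ
  have hσ0 : 0 < σ := Real.sqrt_pos.2 (by positivity)
  have hweight : A / σ ^ 2 = n := by
    rw [hσ, Real.sq_sqrt (by positivity), div_div_cancel₀ hA.ne']
  have hradius : cexp (-(σ : ℂ)) ^ n = (Real.exp (-(n * σ)) : ℝ) := by
    rw [← exp_nat_mul]
    push_cast
    rw [mul_neg]
  have hpi : (2 * Real.pi : ℂ) = 2 * √Real.pi * √Real.pi := by
    rw [mul_assoc, ← ofReal_mul, Real.mul_self_sqrt Real.pi_pos.le]
  have hsqrt : (√Real.pi : ℂ) ≠ 0 := ofReal_ne_zero.2 (Real.sqrt_pos.2 Real.pi_pos).ne'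
  have hgrowth : (saddleScale A σ : ℂ) * (Real.exp (-(n * σ)) : ℝ) =
      (2 * √Real.pi * saddleGrowth A n : ℂ)⁻¹ := by
    exact_mod_cast congrArg ofReal (saddleScale_sqrt_div_mul_exp hA hn')
  simp only [Function.comp_apply, ← hσ, hweight]
  rw [mul_sub, inv_mul_cancel_left₀ hsqrt,
    integral_circle_mul_exp_eq_coeff hf (norm_exp_neg_lt_one (by simpa only [ofReal_re])),
    hradius, hpi, mul_left_comm (saddleScale A σ : ℂ), mul_left_comm (saddleScale A σ : ℂ), hgrowth]
  congr 1
  field_simp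

end CircleMethod

section SaddleGrowth

theorem tendsto_sqrt_sub_sqrt_sub (δ : ℝ) :
    Tendsto (fun x : ℝ => √x - √(x - δ)) atTop (𝓝 0) := by
  have hbound : Tendsto (fun x : ℝ => |δ| / √x) atTop (𝓝 0) :=
    tendsto_const_nhds.div_atTop Real.tendsto_sqrt_atTop
  refine squeeze_zero_norm' ?_ hbound
  filter_upwards [eventually_gt_atTop 0, eventually_ge_atTop δ] with x hx hδ
  have hsqrt : 0 < √x := Real.sqrt_pos.2 hx
  rw [Real.norm_eq_abs, le_div_iff₀ hsqrt]
  calc |√x - √(x - δ)| * √x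
      ≤ |√x - √(x - δ)| * |√x + √(x - δ)| := by
        gcongr
        exact (le_add_of_nonneg_right (Real.sqrt_nonneg _)).trans (le_abs_self _)
    _ = |δ| := by
        rw [← abs_mul, mul_comm, ← sq_sub_sq, Real.sq_sqrt hx.le, Real.sq_sqrt (sub_nonneg.2 hδ),
          sub_sub_cancel]

theorem tendsto_div_sub_atTop (δ : ℝ) : Tendsto (fun x : ℝ => x / (x - δ)) atTop (𝓝 1) := by
  have h : Tendsto (fun x : ℝ => 1 + δ / (x - δ)) atTop (𝓝 (1 + 0)) :=
    tendsto_const_nhds.add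
      (tendsto_const_nhds.div_atTop (tendsto_atTop_add_const_right _ (-δ) tendsto_id))
  rw [add_zero] at h
  refine h.congr' ?_
  filter_upwards [eventually_gt_atTop δ] with x hx
  rw [one_add_div (sub_pos.2 hx).ne', sub_add_cancel]

theorem saddleGrowth_pos {A x : ℝ} (hA : 0 < A) (hx : 0 < x) : 0 < saddleGrowth A x := by
  have := Real.pi_pos
  unfold saddleGrowth
  positivity

theorem tendsto_saddleGrowth_div_saddleGrowth_sub {A : ℝ} (hA : 0 < A) (δ : ℝ) :
    Tendsto (fun x => saddleGrowth A x / saddleGrowth A (x - δ)) atTop (𝓝 1) := by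
  have hpow := (tendsto_div_sub_atTop δ).rpow_const (p := -(3 : ℝ) / 4) (Or.inl one_ne_zero)
  have hexp := ((tendsto_sqrt_sub_sqrt_sub δ).const_mul (2 * √A)).rexp
  have h := hpow.mul hexp
  rw [Real.one_rpow, mul_zero, Real.exp_zero, mul_one] at h
  refine h.congr' ?_
  filter_upwards [eventually_gt_atTop 0, eventually_gt_atTop δ] with x hx hδ
  have : 0 < A ^ ((1 : ℝ) / 4) := Real.rpow_pos_of_pos hA _
  have : 0 < (x - δ) ^ (-(3 : ℝ) / 4) := Real.rpow_pos_of_pos (sub_pos.2 hδ) _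
  have : 0 < √Real.pi := Real.sqrt_pos.2 Real.pi_pos
  rw [saddleGrowth, saddleGrowth, Real.div_rpow hx.le (sub_pos.2 hδ).le, mul_sub, Real.exp_sub,
    Real.sqrt_mul hA.le, Real.sqrt_mul hA.le, mul_assoc 2, mul_assoc 2]
  field_simp

theorem two_mul_saddleGrowth_pi_sq_div_thirty (x : ℝ) :
    2 * saddleGrowth (Real.pi ^ 2 / 30) x = (30 : ℝ) ^ (-(1 : ℝ) / 4) * x ^ (-(3 : ℝ) / 4) *
      Real.exp (√2 * Real.pi / √15 * √x) := by
  have : 0 < √Real.pi := Real.sqrt_pos.2 Real.pi_pos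
  have hpi_pow : (Real.pi ^ 2) ^ ((1 : ℝ) / 4) = √Real.pi := by
    rw [← Real.rpow_natCast_mul Real.pi_pos.le, Real.sqrt_eq_rpow]
    norm_num
  have hroot : √(30 : ℝ) = √2 * √15 := by
    rw [← Real.sqrt_mul zero_le_two]
    norm_num
  have hexp : 2 * √(Real.pi ^ 2 / 30 * x) = √2 * Real.pi / √15 * √x := by
    rw [Real.sqrt_mul (by positivity), Real.sqrt_div (sq_nonneg _), Real.sqrt_sq Real.pi_pos.le,
      hroot]
    nth_rw 1 [← Real.mul_self_sqrt zero_le_two]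
    field_simp
  have hconst : (Real.pi ^ 2 / 30) ^ ((1 : ℝ) / 4) = √Real.pi * (30 : ℝ) ^ (-(1 : ℝ) / 4) := by
    rw [Real.div_rpow (sq_nonneg _) (by norm_num), hpi_pow, neg_div (4 : ℝ) 1,
      Real.rpow_neg (by norm_num), div_eq_mul_inv]
  rw [saddleGrowth, hexp, hconst]
  field_simp

end SaddleGrowth

section TangPhase

/-- The oscillating factor of the asymptotic formula: half the sum of the contributions of the
three dominant cusps `tangCusp`. -/
noncomputable def tangPhase (n : ℕ) : ℝ :=
  Real.sin (Real.pi / 5) + Real.sin (2 * Real.pi / 5 * (2 * (n : ℝ) + 1))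

theorem tangPhase_periodic : Function.Periodic tangPhase 5 := by
  intro n
  rw [tangPhase, tangPhase, ← Real.sin_add_nat_mul_two_pi (2 * Real.pi / 5 * (2 * (n : ℝ) + 1)) 2]
  push_cast
  ring_nf

theorem tangPhase_ne_zero {n : ℕ} (hn : n % 5 ≠ 1) : tangPhase n ≠ 0 := by
  have hpi := Real.pi_pos
  have hsin : 0 < Real.sin (Real.pi / 5) :=
    Real.sin_pos_of_pos_of_lt_pi (by linarith) (by linarith)
  have hsin_lt : Real.sin (Real.pi / 5) < Real.sin (2 * Real.pi / 5) :=
    Real.sin_lt_sin_of_lt_of_le_pi_div_two (by linarith) (by linarith) (by linarith)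
  have hlt : n % 5 < 5 := Nat.mod_lt _ (by norm_num)
  rw [← tangPhase_periodic.map_mod_nat, tangPhase]
  generalize n % 5 = r at hn hlt
  interval_cases r
  · rw [show 2 * Real.pi / 5 * (2 * ((0 : ℕ) : ℝ) + 1) = 2 * Real.pi / 5 by push_cast; ring]
    linarith
  · exact absurd rfl hn
  · rw [show 2 * Real.pi / 5 * (2 * ((2 : ℕ) : ℝ) + 1) = (2 : ℕ) * Real.pi by push_cast; ring,
      Real.sin_nat_mul_pi]
    linarith
  · rw [show 2 * Real.pi / 5 * (2 * ((3 : ℕ) : ℝ) + 1) = Real.pi - Real.pi / 5 + 2 * Real.pi by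
        push_cast; ring,
      Real.sin_add_two_pi, Real.sin_pi_sub]
    linarith
  · rw [show 2 * Real.pi / 5 * (2 * ((4 : ℕ) : ℝ) + 1) =
        -(2 * Real.pi / 5) + (2 : ℕ) * (2 * Real.pi) by push_cast; ring,
      Real.sin_add_nat_mul_two_pi, Real.sin_neg]
    linarith

theorem exists_pos_le_abs_tangPhase : ∃ δ > 0, ∀ n : ℕ, n % 5 ≠ 1 → δ ≤ |tangPhase n| := by
  obtain ⟨r, hr, hmin⟩ := Finset.exists_min_image ((Finset.range 5).filter (· % 5 ≠ 1))
    (fun r => |tangPhase r|) ⟨0, by decide⟩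
  refine ⟨_, abs_pos.2 (tangPhase_ne_zero (Finset.mem_filter.1 hr).2), fun n hn => ?_⟩
  have h := hmin (n % 5) (Finset.mem_filter.2
    ⟨Finset.mem_range.2 (Nat.mod_lt _ (by norm_num)), by rwa [Nat.mod_mod]⟩)
  rwa [tangPhase_periodic.map_mod_nat] at h

theorem tangCusp_injective : Function.Injective tangCusp := by
  have hpi := Real.pi_pos
  intro i j hij
  fin_cases i <;> fin_cases j <;> first
    | rfl
    | simp only [tangCusp, Fin.zero_eta, Fin.mk_one, Fin.reduceFinMk, Matrix.cons_val] at hij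
      linarith

/-- The limits of `tangProduct q * e^{-π²/(30 s)}` as `q = e^{i tangCusp j} e^{-s}` approaches the
three dominant cusps. -/
noncomputable def tangCuspValue : Fin 3 → ℂ :=
  ![(2 * Real.sin (Real.pi / 5) : ℝ), cexp ((Real.pi / 10 : ℝ) * I),
    cexp ((-(Real.pi / 10) : ℝ) * I)]

theorem tendsto_tangProduct_tangCusp (i : Fin 3) :
    Tendsto (fun s => tangProduct (cexp (tangCusp i * I) * cexp (-s)) *
        cexp (-((Real.pi ^ 2 / 30 : ℝ) / s)))
      horocyclicNhds (𝓝 (tangCuspValue i)) := by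
  fin_cases i
  · simpa [tangCusp, tangCuspValue] using tendsto_tangProduct_exp_neg
  · simpa [tangCusp, tangCuspValue] using tendsto_tangProduct_exp_four_pi_div_five (σ := 1) abs_one
  · simpa [tangCusp, tangCuspValue] using
      tendsto_tangProduct_exp_four_pi_div_five (σ := -1) (by rw [abs_neg, abs_one])

theorem sum_tangCuspValue_mul_exp (n : ℕ) :
    ∑ i, tangCuspValue i * cexp ((-n * tangCusp i : ℝ) * I) = (2 * tangPhase n : ℝ) := by
  have hsin : Real.sin (2 * Real.pi / 5 * (2 * (n : ℝ) + 1)) =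
      Real.cos (Real.pi / 10 - 4 * Real.pi * n / 5) := by
    rw [← Real.sin_pi_div_two_sub]
    ring_nf
  rw [Fin.sum_univ_three, tangPhase, hsin]
  simp only [tangCuspValue, tangCusp, Matrix.cons_val_zero, Matrix.cons_val_one, Matrix.cons_val]
  rw [← exp_add, ← exp_add, mul_zero, ofReal_zero, zero_mul, exp_zero, mul_one, mul_add,
    ofReal_add, ofReal_mul 2 (Real.cos _), ofReal_ofNat, ofReal_cos, two_cos, add_assoc]
  push_cast
  ring_nf

end TangPhase

theorem tendsto_div_nhds_one_of_sub {α : Type*} {l : Filter α} {a m : α → ℂ} {δ : ℝ} (hδ : 0 < δ)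
    (hm : ∀ᶠ x in l, δ ≤ ‖m x‖) (h : Tendsto (fun x => a x - m x) l (𝓝 0)) :
    Tendsto (fun x => a x / m x) l (𝓝 1) := by
  have hne : ∀ᶠ x in l, m x ≠ 0 := hm.mono fun x hx => norm_pos_iff.1 (hδ.trans_le hx)
  have hbound : Tendsto (fun x => ‖a x - m x‖ / δ) l (𝓝 0) := by
    simpa only [norm_zero, zero_div] using h.norm.div_const δ
  have hsub : Tendsto (fun x => (a x - m x) / m x) l (𝓝 0) := by
    refine squeeze_zero_norm' ?_ hbound
    filter_upwards [hm] with x hx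
    rw [norm_div]
    gcongr
  refine (by simpa only [zero_add] using hsub.add_const 1 :
    Tendsto (fun x => (a x - m x) / m x + 1) l (𝓝 1)).congr' ?_
  filter_upwards [hne] with x hx
  rw [sub_div, div_self hx, sub_add_cancel]

theorem tendsto_coeff_div_saddleGrowth_div_tangPhase {g : ℕ → ℂ}
    (hg : ∀ q : ℂ, ‖q‖ < 1 → HasSum (fun n => g n * q ^ n) (tangProduct q)) :
    Tendsto (fun n : ℕ => g n / saddleGrowth (Real.pi ^ 2 / 30) n / (2 * tangPhase n : ℝ))
      (atTop ⊓ 𝓟 {n : ℕ | n % 5 ≠ 1}) (𝓝 1) := by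
  obtain ⟨δ, hδ, hphase⟩ := exists_pos_le_abs_tangPhase
  have h := tendsto_coeff_div_saddleGrowth_sub (A := Real.pi ^ 2 / 30) (B := Real.pi ^ 2 / 40)
    (by positivity) (by gcongr; norm_num) tangCusp_injective abs_tangCusp_lt_pi hg
    tendsto_tangProduct_tangCusp eventually_norm_tangProduct_le_minorArc
  simp only [sum_tangCuspValue_mul_exp] at h
  refine tendsto_div_nhds_one_of_sub (mul_pos two_pos hδ) ?_ (h.mono_left inf_le_left)
  filter_upwards [mem_inf_of_right (mem_principal_self _)] with n hn
  rw [norm_real, Real.norm_eq_abs, abs_mul, abs_two]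
  gcongr
  exact hphase n hn

/-- Let `g : ℕ → ℂ` satisfy
`Σ_{n≥0} g(n)qⁿ = (q²,q⁸;q¹⁰)_∞ (q⁴,q⁶;q¹⁰)²_∞ (q²,q³;q⁵)_∞^{−2}` for `|q| < 1`. Then,
as `n → ∞` restricted to `n ≢ 1 (mod 5)`,
`g(n) ∼ 30^{−1/4}·(sin(π/5) + sin((2π/5)(2n+1)))·(n − 1/3)^{−3/4}·exp((√2·π/√15)·√(n − 1/3))`. -/
theorem tang_coeff_asymptotic (g : ℕ → ℂ)
    (hg : ∀ q : ℂ, ‖q‖ < 1 → HasSum (fun n : ℕ => g n * q ^ n)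
      ((∏' k : ℕ, (1 - q ^ (10 * k + 2)) * (1 - q ^ (10 * k + 8))) *
        (∏' k : ℕ, (1 - q ^ (10 * k + 4)) * (1 - q ^ (10 * k + 6))) ^ 2 *
        (∏' k : ℕ, (1 - q ^ (5 * k + 2)) * (1 - q ^ (5 * k + 3))) ^ (-2 : ℤ))) :
    Tendsto (fun n : ℕ =>
        g n / ((((30 : ℝ) ^ (-(1 : ℝ) / 4) *
          (Real.sin (Real.pi / 5) + Real.sin (2 * Real.pi / 5 * (2 * (n : ℝ) + 1))) *
          ((n : ℝ) - 1 / 3) ^ (-(3 : ℝ) / 4) *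
          Real.exp (Real.sqrt 2 * Real.pi / Real.sqrt 15 *
            Real.sqrt ((n : ℝ) - 1 / 3)) : ℝ) : ℂ)))
      (atTop ⊓ Filter.principal {n : ℕ | n % 5 ≠ 1}) (nhds 1) := by
  have hA : 0 < Real.pi ^ 2 / 30 := by positivity
  have hcoeff := tendsto_coeff_div_saddleGrowth_div_tangPhase fun q hq =>
    tprod_eq_tangProduct hq ▸ hg q hq
  have hshift : Tendsto (fun n : ℕ => ((saddleGrowth (Real.pi ^ 2 / 30) n /
      saddleGrowth (Real.pi ^ 2 / 30) (n - 1 / 3) : ℝ) : ℂ)) atTop (𝓝 (1 : ℝ)) :=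
    ((tendsto_saddleGrowth_div_saddleGrowth_sub hA (1 / 3)).comp
      tendsto_natCast_atTop_atTop).ofReal
  have h := hcoeff.mul (hshift.mono_left inf_le_left)
  rw [ofReal_one, mul_one] at h
  refine h.congr' ?_
  filter_upwards [mem_inf_of_left (eventually_gt_atTop 0)] with n hn
  have hgrowth_ne : (saddleGrowth (Real.pi ^ 2 / 30) n : ℂ) ≠ 0 :=
    ofReal_ne_zero.2 (saddleGrowth_pos hA (Nat.cast_pos.2 hn)).ne'
  have hmain := two_mul_saddleGrowth_pi_sq_div_thirty (n - 1 / 3)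
  rw [mul_right_comm (30 ^ _ : ℝ), mul_right_comm _ _ (Real.exp _), ← hmain, ← tangPhase]
  push_cast
  field_simp
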